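/- Suppose V is a good homogeneous ssee. Then for every hereditary property P of [0,1]-decorations of V, exactly one of the following holds: either the limit π(P) = lim_{n→∞} ex(V_n, P_n)/|V_n| exists and is finite, and then vol(P_n) = e^{−(π(P)+o(1))|V_n|}, i.e. (−log vol(P_n))/|V_n| → π(P); or ex(V_n, P_n)/|V_n| → ∞ as n → ∞, and then the volume of P_n decays superexponentially in |V_n|, i.e. (−log vol(P_n))/|V_n| → ∞. -/

import Mathlib

open MeasureTheory Filter Set

noncomputable section

/-- A set-sequence equipped with embeddings (ssee): a sequence of finite nonempty
sets `V n` together with, for `N ≤ n`, a collection of injections `V N → V n`. -/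
structure Ssee where
  V : ℕ → Type
  fin : ∀ n, Fintype (V n)
  dec : ∀ n, DecidableEq (V n)
  nonemp : ∀ n, Nonempty (V n)
  emb : (N n : ℕ) → Finset (V N → V n)
  emb_inj : ∀ N n, N ≤ n → ∀ φ ∈ emb N n, Function.Injective φ

attribute [instance] Ssee.fin Ssee.dec Ssee.nonemp

/-- `I(N,n)`: the number of pairs of embeddings whose images intersect in exactly `i`
elements, summed over all `i` with `1 < i < |V_N|`. -/
def Ssee.interCount (S : Ssee) (N n : ℕ) : ℕ :=
  ((S.emb N n ×ˢ S.emb N n).filter (fun p =>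
    1 < ((Finset.univ.image p.1) ∩ (Finset.univ.image p.2)).card ∧
    ((Finset.univ.image p.1) ∩ (Finset.univ.image p.2)).card < Fintype.card (S.V N))).card

/-- A ssee is good if `|V_n| → ∞`, and for every `N` with `|V_N| > 1` we have
`|emb N n| / |V_n| → ∞` and `|V_n| · I(N,n) / |emb N n|² → 0`. -/
def Ssee.Good (S : Ssee) : Prop :=
  Tendsto (fun n => Fintype.card (S.V n)) atTop atTop ∧
  (∀ N, 1 < Fintype.card (S.V N) →
    Tendsto (fun n => ((S.emb N n).card : ℝ) / (Fintype.card (S.V n) : ℝ)) atTop atTop) ∧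
  (∀ N, 1 < Fintype.card (S.V N) →
    Tendsto (fun n => ((Fintype.card (S.V n) : ℝ) * (S.interCount N n : ℝ)) /
      ((S.emb N n).card : ℝ) ^ 2) atTop (nhds 0))

/-- Homogeneous: every point of `V n` lies in the same strictly positive number of
images of embeddings of `V N`. -/
def Ssee.Homogeneous (S : Ssee) : Prop :=
  ∀ N n, N ≤ n → ∃ k : ℕ, 0 < k ∧ ∀ x : S.V n,
    ((S.emb N n).filter (fun φ => x ∈ Finset.univ.image φ)).card = k

/-- The unit cube `[0,1]^ι`. -/
def unitCube (ι : Type) : Set (ι → ℝ) := Set.univ.pi fun _ => Set.Icc (0:ℝ) 1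

/-- A box in `[0,1]^ι`: a product of measurable subsets of `[0,1]`. -/
def IsBox {ι : Type} (b : Set (ι → ℝ)) : Prop :=
  ∃ A : ι → Set ℝ, (∀ i, MeasurableSet (A i) ∧ A i ⊆ Set.Icc 0 1) ∧ b = Set.univ.pi A

/-- A simple box: a product of finite unions of intervals (i.e. of order-connected
subsets of `ℝ`) contained in `[0,1]`. -/
def IsSimpleBox {ι : Type} (b : Set (ι → ℝ)) : Prop :=
  ∃ A : ι → Set ℝ,
    (∀ i, A i ⊆ Set.Icc 0 1 ∧
      ∃ s : Finset (Set ℝ), (∀ J ∈ s, J.OrdConnected) ∧ A i = ⋃₀ ↑s) ∧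
    b = Set.univ.pi A

/-- The projection `b_{↓φ}` of a body `b ⊆ [0,1]^β` along `φ : α → β`: those `c` whose
fiber (in the coordinates outside the range of `φ`) has positive measure. -/
def projBody {α β : Type} [Fintype α] [Fintype β] (φ : α → β) (b : Set (β → ℝ)) :
    Set (α → ℝ) :=
  letI : ∀ p : Prop, Decidable p := fun p => Classical.propDecidable p
  {c | 0 < volume {d : {i : β // i ∉ Set.range φ} → ℝ |
    (fun i : β => if h : i ∈ Set.range φ then c h.choose else d ⟨i, h⟩) ∈ b}}

/-- The lift `b_{↑φ}` of a body `b ⊆ [0,1]^α` along `φ : α → β`. -/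
def liftBody {α β : Type} (φ : α → β) (b : Set (α → ℝ)) : Set (β → ℝ) :=
  {c | c ∈ unitCube β ∧ (fun j => c (φ j)) ∈ b}

/-- The upper shadow `∂⁺_{V_n}(b)` of a body `b ⊆ [0,1]^{V_N}`. -/
def Ssee.upperShadow (S : Ssee) (N n : ℕ) (b : Set (S.V N → ℝ)) : Set (S.V n → ℝ) :=
  ⋃ φ ∈ S.emb N n, liftBody φ b

/-- A hereditary `[0,1]`-decoration property: a sequence of measurable subsets of the
unit cubes whose complements (within the cubes) are closed under upper shadows. -/
def Ssee.Hereditary (S : Ssee) (P : ∀ n, Set (S.V n → ℝ)) : Prop :=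
  (∀ n, MeasurableSet (P n) ∧ P n ⊆ unitCube (S.V n)) ∧
  ∀ N n, N ≤ n → S.upperShadow N n (unitCube (S.V N) \ P N) ⊆ unitCube (S.V n) \ P n

/-- Expectation of `f φ` over an embedding `φ` chosen uniformly from `emb N n`. -/
def Ssee.expProj (S : Ssee) (N n : ℕ) (f : (S.V N → S.V n) → ℝ) : ℝ :=
  (∑ φ ∈ S.emb N n, f φ) / ((S.emb N n).card : ℝ)

/-- The entropy `Ent(b) = -log vol(b)`, valued in `EReal` (so `Ent(b) = ⊤` when
`vol(b) = 0`). -/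
def entE {ι : Type} [Fintype ι] (b : Set (ι → ℝ)) : EReal := -(ENNReal.log (volume b))

/-- Extremal entropy `ex(V_n, P_n) = inf { Ent(b) : b a box with vol(b \ P_n) = 0 }`. -/
def Ssee.exEnt (S : Ssee) (P : ∀ n, Set (S.V n → ℝ)) (n : ℕ) : EReal :=
  sInf {e : EReal | ∃ b : Set (S.V n → ℝ), IsBox b ∧ volume (b \ P n) = 0 ∧ e = entE b}


set_option linter.unusedSectionVars false
set_option linter.unusedVariables false

/-! ### Section A: conditional expectations on finite product spaces -/

section CondExp

variable {V K : Type} [Fintype V] [DecidableEq V] [Fintype K] [DecidableEq K]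

/-- configurations agreeing with `z` on `T` -/
def hcCls (T : Finset V) (z : V → K) : Finset (V → K) :=
  Finset.univ.filter (fun y => ∀ v ∈ T, y v = z v)

def hcMass (p : (V → K) → ℝ) (T : Finset V) (z : V → K) : ℝ := ∑ y ∈ hcCls T z, p y

def hcCe (p : (V → K) → ℝ) (T : Finset V) (f : (V → K) → ℝ) (z : V → K) : ℝ :=
  (∑ y ∈ hcCls T z, p y * f y) / hcMass p T z

def hcEx (p : (V → K) → ℝ) (f : (V → K) → ℝ) : ℝ := ∑ z, p z * f z

def hcMeas (T : Finset V) (g : (V → K) → ℝ) : Prop :=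
  ∀ y z, (∀ v ∈ T, y v = z v) → g y = g z

lemma hcCls_congr {T : Finset V} {y z : V → K} (h : ∀ v ∈ T, y v = z v) :
    hcCls T y = hcCls T z := by
  ext x
  simp only [hcCls, Finset.mem_filter, Finset.mem_univ, true_and]
  constructor
  · intro hx v hv; rw [hx v hv, h v hv]
  · intro hx v hv; rw [hx v hv, h v hv]

lemma hcMeas_ce (p : (V → K) → ℝ) (T : Finset V) (f : (V → K) → ℝ) : hcMeas T (hcCe p T f) := by
  intro y z h
  simp only [hcCe, hcMass, hcCls_congr h]

lemma hcMeas.mono {T T' : Finset V} (h : T ⊆ T') {g : (V → K) → ℝ} (hg : hcMeas T g) :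
    hcMeas T' g := fun y z hyz => hg y z (fun v hv => hyz v (h hv))

lemma hcMeas.mul {T : Finset V} {g g' : (V → K) → ℝ} (hg : hcMeas T g) (hg' : hcMeas T g') :
    hcMeas T (fun z => g z * g' z) := fun y z h => by
  simp only [hg y z h, hg' y z h]

lemma mem_hcCls_self (T : Finset V) (z : V → K) : z ∈ hcCls T z := by simp [hcCls]

lemma mem_hcCls {T : Finset V} {z y : V → K} : y ∈ hcCls T z ↔ ∀ v ∈ T, y v = z v := by
  simp [hcCls]

lemma hcMass_nonneg {p : (V → K) → ℝ} (hp : ∀ z, 0 ≤ p z) (T : Finset V) (z : V → K) :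
    0 ≤ hcMass p T z := Finset.sum_nonneg (fun y _ => hp y)

lemma le_hcMass {p : (V → K) → ℝ} (hp : ∀ z, 0 ≤ p z) (T : Finset V) (z : V → K) :
    p z ≤ hcMass p T z :=
  Finset.single_le_sum (f := p) (fun y _ => hp y) (mem_hcCls_self T z)

/-- The defining property of the conditional expectation. -/
lemma hcEx_mul_ce {p : (V → K) → ℝ} (hp : ∀ z, 0 ≤ p z) {T : Finset V} (f : (V → K) → ℝ)
    {g : (V → K) → ℝ} (hg : hcMeas T g) :
    hcEx p (fun z => g z * hcCe p T f z) = hcEx p (fun z => g z * f z) := by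
  have h1 : hcEx p (fun z => g z * hcCe p T f z)
      = ∑ z, ∑ y, if (∀ v ∈ T, y v = z v) then p z * p y * g y * f y / hcMass p T y else 0 := by
    unfold hcEx
    refine Finset.sum_congr rfl fun z _ => ?_
    rw [← Finset.sum_filter]
    simp only [hcCe]
    rw [Finset.sum_div, Finset.mul_sum, Finset.mul_sum]
    refine Finset.sum_congr rfl fun y hy => ?_
    have hy' := mem_hcCls.1 hy
    rw [← hg y z hy']
    have : hcMass p T y = hcMass p T z := by simp only [hcMass, hcCls_congr hy']
    rw [this]; ring
  rw [h1, Finset.sum_comm]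
  unfold hcEx
  refine Finset.sum_congr rfl fun y _ => ?_
  have h2 : ∀ z : V → K, (if (∀ v ∈ T, y v = z v) then p z * p y * g y * f y / hcMass p T y else 0)
      = (if (∀ v ∈ T, z v = y v) then p z else 0) * (p y * g y * f y / hcMass p T y) := by
    intro z
    by_cases h : ∀ v ∈ T, y v = z v
    · have h' : ∀ v ∈ T, z v = y v := fun v hv => (h v hv).symm
      rw [if_pos h, if_pos h']; ring
    · have h' : ¬ ∀ v ∈ T, z v = y v := fun h' => h fun v hv => (h' v hv).symm
      rw [if_neg h, if_neg h']; ring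
  simp only [h2]
  rw [← Finset.sum_mul, ← Finset.sum_filter]
  change hcMass p T y * _ = _
  by_cases h0 : hcMass p T y = 0
  · have : p y = 0 := le_antisymm (h0 ▸ le_hcMass hp T y) (hp y)
    simp [this]
  · field_simp

lemma hcCe_nonneg {p : (V → K) → ℝ} (hp : ∀ z, 0 ≤ p z) (T : Finset V) {f : (V → K) → ℝ}
    (hf : ∀ z, 0 ≤ f z) (z : V → K) : 0 ≤ hcCe p T f z :=
  div_nonneg (Finset.sum_nonneg fun y _ => mul_nonneg (hp y) (hf y)) (hcMass_nonneg hp T z)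

lemma hcCe_le_one {p : (V → K) → ℝ} (hp : ∀ z, 0 ≤ p z) (T : Finset V) {f : (V → K) → ℝ}
    (hf : ∀ z, f z ≤ 1) (z : V → K) : hcCe p T f z ≤ 1 := by
  refine div_le_one_of_le₀ ?_ (hcMass_nonneg hp T z)
  exact Finset.sum_le_sum fun y _ => mul_le_of_le_one_right (hp y) (hf y)

lemma hcEx_mono {p : (V → K) → ℝ} (hp : ∀ z, 0 ≤ p z) {f g : (V → K) → ℝ}
    (h : ∀ z, f z ≤ g z) : hcEx p f ≤ hcEx p g :=
  Finset.sum_le_sum fun z _ => mul_le_mul_of_nonneg_left (h z) (hp z)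

lemma hcEx_add (p f g : (V → K) → ℝ) :
    hcEx p (fun z => f z + g z) = hcEx p f + hcEx p g := by
  simp only [hcEx, mul_add, Finset.sum_add_distrib]

lemma hcEx_sub (p f g : (V → K) → ℝ) :
    hcEx p (fun z => f z - g z) = hcEx p f - hcEx p g := by
  simp only [hcEx, mul_sub, Finset.sum_sub_distrib]

lemma hcEx_const_mul (p f : (V → K) → ℝ) (c : ℝ) :
    hcEx p (fun z => c * f z) = c * hcEx p f := by
  simp only [hcEx, Finset.mul_sum]
  exact Finset.sum_congr rfl fun z _ => by ring

lemma hcEx_sum {ι : Type} (s : Finset ι) (p : (V → K) → ℝ) (f : ι → (V → K) → ℝ) :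
    hcEx p (fun z => ∑ i ∈ s, f i z) = ∑ i ∈ s, hcEx p (f i) := by
  simp only [hcEx, Finset.mul_sum]
  exact Finset.sum_comm

lemma hcEx_const {p : (V → K) → ℝ} (h1 : ∑ z, p z = 1) (c : ℝ) : hcEx p (fun _ => c) = c := by
  simp only [hcEx, ← Finset.sum_mul, h1, one_mul]

/-- energy -/
def hcEn (p : (V → K) → ℝ) (T : Finset V) (f : (V → K) → ℝ) : ℝ :=
  hcEx p (fun z => hcCe p T f z ^ 2)

lemma hcPyth {p : (V → K) → ℝ} (hp : ∀ z, 0 ≤ p z) {T T' : Finset V} (h : T ⊆ T')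
    (f : (V → K) → ℝ) :
    hcEx p (fun z => (hcCe p T' f z - hcCe p T f z) ^ 2) = hcEn p T' f - hcEn p T f := by
  have e1 : hcEx p (fun z => hcCe p T f z * hcCe p T' f z) = hcEn p T f := by
    rw [hcEx_mul_ce hp f ((hcMeas_ce p T f).mono h), ← hcEx_mul_ce hp f (hcMeas_ce p T f)]
    unfold hcEn
    congr 1; ext z; ring
  have : (fun z => (hcCe p T' f z - hcCe p T f z) ^ 2) =
      fun z => (hcCe p T' f z ^ 2 - 2 * (hcCe p T f z * hcCe p T' f z)) + hcCe p T f z ^ 2 := by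
    ext z; ring
  rw [this, hcEx_add, hcEx_sub, hcEx_const_mul, e1]
  unfold hcEn
  ring

lemma hcEn_mono {p : (V → K) → ℝ} (hp : ∀ z, 0 ≤ p z) {T T' : Finset V} (h : T ⊆ T')
    (f : (V → K) → ℝ) : hcEn p T f ≤ hcEn p T' f := by
  have := hcPyth hp h f
  have h2 : 0 ≤ hcEx p (fun z => (hcCe p T' f z - hcCe p T f z) ^ 2) :=
    Finset.sum_nonneg fun z _ => mul_nonneg (hp z) (sq_nonneg _)
  linarith

lemma hcEn_nonneg {p : (V → K) → ℝ} (hp : ∀ z, 0 ≤ p z) (T : Finset V)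
    (f : (V → K) → ℝ) : 0 ≤ hcEn p T f :=
  Finset.sum_nonneg fun z _ => mul_nonneg (hp z) (sq_nonneg _)

lemma hcEn_le_one {p : (V → K) → ℝ} (hp : ∀ z, 0 ≤ p z) (h1 : ∑ z, p z = 1) (T : Finset V)
    {f : (V → K) → ℝ} (hf0 : ∀ z, 0 ≤ f z) (hf1 : ∀ z, f z ≤ 1) : hcEn p T f ≤ 1 := by
  rw [← hcEx_const h1 1]
  refine hcEx_mono hp fun z => ?_
  exact pow_le_one₀ (hcCe_nonneg hp T hf0 z) (hcCe_le_one hp T hf1 z)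

/-- decoupling of a product of two functions -/
lemma hc_decouple {p : (V → K) → ℝ} (hp : ∀ z, 0 ≤ p z) {T T' : Finset V} (h : T ⊆ T')
    (f g : (V → K) → ℝ) (hg : hcMeas T' g) (hg0 : ∀ z, 0 ≤ g z) (hg1 : ∀ z, g z ≤ 1) :
    hcEx p (fun z => |hcCe p T (fun y => f y * g y) z - hcCe p T f z * hcCe p T g z|) ≤
      hcEx p (fun z => |hcCe p T' f z - hcCe p T f z|) := by
  set d : (V → K) → ℝ := fun z => hcCe p T (fun y => f y * g y) z - hcCe p T f z * hcCe p T g z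
    with hd
  set s : (V → K) → ℝ := fun z => if 0 ≤ d z then 1 else -1 with hs
  have hdm : hcMeas T d := by
    intro y z hyz
    simp only [hd, hcMeas_ce p T _ y z hyz]
  have hsm : hcMeas T s := by
    intro y z hyz
    simp only [hs, hdm y z hyz]
  have e1 : (fun z => |d z|) = fun z => s z * hcCe p T (fun y => f y * g y) z -
      (s z * hcCe p T f z) * hcCe p T g z := by
    ext z
    have : |d z| = s z * d z := by
      simp only [hs]
      split_ifs with h0
      · rw [abs_of_nonneg h0, one_mul]
      · rw [abs_of_neg (not_le.1 h0)]; ring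
    rw [this, hd]; ring
  rw [e1, hcEx_sub, hcEx_mul_ce hp _ hsm, hcEx_mul_ce hp _ (hsm.mul (hcMeas_ce p T f))]
  have e2 : hcEx p (fun z => s z * (f z * g z)) = hcEx p (fun z => (s z * g z) * hcCe p T' f z) := by
    rw [hcEx_mul_ce hp f ((hsm.mono h).mul hg)]
    congr 1; ext z; ring
  rw [e2, ← hcEx_sub]
  refine hcEx_mono hp fun z => ?_
  have : s z * g z * hcCe p T' f z - s z * hcCe p T f z * g z =
      (s z * g z) * (hcCe p T' f z - hcCe p T f z) := by ring
  rw [this]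
  refine (le_abs_self _).trans ?_
  rw [abs_mul]
  refine mul_le_of_le_one_left (abs_nonneg _) ?_
  rw [abs_mul, abs_of_nonneg (hg0 z)]
  have : |s z| = 1 := by
    simp only [hs]; split_ifs <;> simp
  rw [this, one_mul]; exact hg1 z

lemma hc_prod_decouple {p : (V → K) → ℝ} (hp : ∀ z, 0 ≤ p z) (h1 : ∑ z, p z = 1)
    {ι : Type} [DecidableEq ι] (T : Finset V) (f : ι → (V → K) → ℝ)
    (T' : ι → Finset V) (hT : ∀ i, T ⊆ T' i)
    (hm : ∀ i j, i ≠ j → hcMeas (T' i) (f j))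
    (hf0 : ∀ i z, 0 ≤ f i z) (hf1 : ∀ i z, f i z ≤ 1) (s : Finset ι) :
    hcEx p (fun z => |hcCe p T (fun y => ∏ i ∈ s, f i y) z - ∏ i ∈ s, hcCe p T (f i) z|) ≤
      ∑ i ∈ s, hcEx p (fun z => |hcCe p (T' i) (f i) z - hcCe p T (f i) z|) := by
  induction s using Finset.induction_on with
  | empty =>
    simp only [Finset.prod_empty, Finset.sum_empty]
    refine le_of_eq (Finset.sum_eq_zero fun z _ => ?_)
    by_cases h0 : hcMass p T z = 0
    · have : p z = 0 := le_antisymm (h0 ▸ le_hcMass hp T z) (hp z)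
      simp [this]
    · have : hcCe p T (fun _ => 1) z = 1 := by
        unfold hcCe
        simp only [mul_one]
        exact div_self h0
      simp [this]
  | insert i s hi ih =>
    rw [Finset.sum_insert hi]
    have hg : hcMeas (T' i) (fun y => ∏ j ∈ s, f j y) := by
      intro y z hyz
      refine Finset.prod_congr rfl fun j hj => ?_
      exact hm i j (fun h => hi (h ▸ hj)) y z hyz
    have hdec := hc_decouple hp (hT i) (f i) (fun y => ∏ j ∈ s, f j y) hg
      (fun z => Finset.prod_nonneg fun j _ => hf0 j z)
      (fun z => Finset.prod_le_one (fun j _ => hf0 j z) fun j _ => hf1 j z)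
    refine le_trans ?_ (add_le_add hdec ih)
    rw [← hcEx_add]
    refine hcEx_mono hp fun z => ?_
    simp only [Finset.prod_insert hi]
    set a := hcCe p T (fun y => f i y * ∏ j ∈ s, f j y) z
    set b := hcCe p T (f i) z with hb
    set c := hcCe p T (fun y => ∏ j ∈ s, f j y) z
    set e := ∏ j ∈ s, hcCe p T (f j) z
    have hb0 : 0 ≤ b := hcCe_nonneg hp T (hf0 i) z
    have hb1 : b ≤ 1 := hcCe_le_one hp T (hf1 i) z
    have : a - b * e = (a - b * c) + b * (c - e) := by ring
    rw [this]
    refine (abs_add_le _ _).trans ?_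
    rw [abs_mul b, abs_of_nonneg hb0]
    gcongr
    exact mul_le_of_le_one_left (abs_nonneg _) hb1

/-- `L¹` distance bounded via energies. -/
lemma hc_abs_le {p : (V → K) → ℝ} (hp : ∀ z, 0 ≤ p z) (h1 : ∑ z, p z = 1) {T T' : Finset V}
    (h : T ⊆ T') (f : (V → K) → ℝ) {σ : ℝ} (hσ : 0 < σ) :
    hcEx p (fun z => |hcCe p T' f z - hcCe p T f z|) ≤
      σ + (hcEn p T' f - hcEn p T f) / σ := by
  rw [← hcPyth hp h f]
  have : σ + hcEx p (fun z => (hcCe p T' f z - hcCe p T f z) ^ 2) / σ =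
      hcEx p (fun z => σ + σ⁻¹ * (hcCe p T' f z - hcCe p T f z) ^ 2) := by
    rw [hcEx_add, hcEx_const h1, hcEx_const_mul]; ring
  rw [this]
  refine hcEx_mono hp fun z => ?_
  set d := hcCe p T' f z - hcCe p T f z
  rw [← sq_abs d]
  have hd := abs_nonneg d
  have : |d| * σ ≤ σ ^ 2 + |d| ^ 2 := by nlinarith [sq_nonneg (|d| - σ)]
  calc |d| = (|d| * σ) / σ := by field_simp
    _ ≤ (σ ^ 2 + |d| ^ 2) / σ := by gcongr
    _ = σ + σ⁻¹ * |d| ^ 2 := by field_simp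

/-- there are few classes -/
lemma hc_classes {p : (V → K) → ℝ} (hp : ∀ z, 0 ≤ p z) (T : Finset V) :
    hcEx p (fun z => (hcMass p T z)⁻¹) ≤ (Fintype.card K : ℝ) ^ T.card := by
  have h : hcEx p (fun z => (hcMass p T z)⁻¹) =
      ∑ w : (T → K), ∑ z ∈ Finset.univ.filter (fun z : V → K => (fun v : T => z v) = w),
        p z * (hcMass p T z)⁻¹ := by
    unfold hcEx
    rw [Finset.sum_fiberwise]
  rw [h]
  have h2 : ∀ w : (T → K), ∑ z ∈ Finset.univ.filter (fun z : V → K => (fun v : T => z v) = w),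
        p z * (hcMass p T z)⁻¹ ≤ 1 := by
    intro w
    by_cases hw : ∃ z0 : V → K, (fun v : T => z0 v) = w
    · obtain ⟨z0, rfl⟩ := hw
      have e : Finset.univ.filter (fun z : V → K => (fun v : T => z v) = (fun v : T => z0 v))
          = hcCls T z0 := by
        ext y
        simp only [Finset.mem_filter, Finset.mem_univ, true_and, mem_hcCls, funext_iff,
          Subtype.forall]
      rw [e]
      have : ∑ z ∈ hcCls T z0, p z * (hcMass p T z)⁻¹ = hcMass p T z0 * (hcMass p T z0)⁻¹ := by
        conv_rhs => rw [hcMass, Finset.sum_mul]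
        refine Finset.sum_congr rfl fun z hz => ?_
        simp only [hcMass, hcCls_congr (mem_hcCls.1 hz)]
      rw [this]
      exact mul_inv_le_one
    · rw [Finset.sum_eq_zero]
      · exact zero_le_one
      · intro z hz
        exact absurd ⟨z, (Finset.mem_filter.1 hz).2⟩ hw
  refine (Finset.sum_le_sum fun w _ => h2 w).trans ?_
  simp

end CondExp

/-! ### Section B: random subsets -/

section Bern

variable {V : Type} [Fintype V] [DecidableEq V]

def hbE (t : ℝ) (f : Finset V → ℝ) : ℝ :=
  ∑ R : Finset V, (∏ _v ∈ R, t) * (∏ _v ∈ Finset.univ \ R, (1 - t)) * f R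

lemma hbE_mono {t : ℝ} (h0 : 0 ≤ t) (h1 : t ≤ 1) {f g : Finset V → ℝ} (h : ∀ R, f R ≤ g R) :
    hbE t f ≤ hbE t g := by
  refine Finset.sum_le_sum fun R _ => mul_le_mul_of_nonneg_left (h R) ?_
  exact mul_nonneg (Finset.prod_nonneg fun _ _ => h0)
    (Finset.prod_nonneg fun _ _ => sub_nonneg.2 h1)

lemma hbE_add (t : ℝ) (f g : Finset V → ℝ) :
    hbE t (fun R => f R + g R) = hbE t f + hbE t g := by
  simp only [hbE, mul_add, Finset.sum_add_distrib]

lemma hbE_mul (t c : ℝ) (f : Finset V → ℝ) :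
    hbE t (fun R => c * f R) = c * hbE t f := by
  simp only [hbE, Finset.mul_sum]
  exact Finset.sum_congr rfl fun z _ => by ring

lemma hbE_sum {ι : Type} (s : Finset ι) (t : ℝ) (f : ι → Finset V → ℝ) :
    hbE t (fun R => ∑ i ∈ s, f i R) = ∑ i ∈ s, hbE t (f i) := by
  simp only [hbE, Finset.mul_sum]
  exact Finset.sum_comm

lemma hbE_sub (t : ℝ) (B : Finset V) :
    hbE t (fun R => if B ⊆ R then 1 else 0) = t ^ B.card := by
  have h := Finset.prod_add (fun _ : V => t) (fun v => if v ∈ B then 0 else 1 - t) Finset.univ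
  have hl : ∏ i : V, (t + if i ∈ B then 0 else 1 - t) = t ^ B.card := by
    have : ∀ i : V, (t + if i ∈ B then 0 else 1 - t) = if i ∈ B then t else 1 := by
      intro i; split_ifs <;> ring
    simp only [this]
    rw [Finset.prod_ite_mem]; simp
  rw [← hl, h, Finset.powerset_univ]
  refine Finset.sum_congr rfl fun R _ => ?_
  rw [mul_assoc]
  congr 1
  by_cases hB : B ⊆ R
  · simp only [if_pos hB, mul_one]
    refine Finset.prod_congr rfl fun v hv => ?_
    have : v ∉ B := fun h => (Finset.mem_sdiff.1 hv).2 (hB h)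
    simp [this]
  · simp only [if_neg hB, mul_zero]
    obtain ⟨v, hv, hvR⟩ := Finset.not_subset.1 hB
    symm
    exact Finset.prod_eq_zero (Finset.mem_sdiff.2 ⟨Finset.mem_univ v, hvR⟩) (by simp [hv])

lemma hbE_const (t c : ℝ) : hbE (V := V) t (fun _ => c) = c := by
  have := hbE_sub t (∅ : Finset V)
  simp only [Finset.empty_subset, if_true, Finset.card_empty, pow_zero] at this
  have h2 := hbE_mul (V := V) t c (fun _ => 1)
  simp only [mul_one] at h2
  rw [h2, this, mul_one]

lemma hbE_card (t : ℝ) : hbE (V := V) t (fun R => (R.card : ℝ)) = t * Fintype.card V := by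
  have : ∀ R : Finset V, (R.card : ℝ) = ∑ v : V, if ({v} : Finset V) ⊆ R then (1 : ℝ) else 0 := by
    intro R; simp
  simp only [this]
  rw [hbE_sum]
  simp only [hbE_sub]
  simp [mul_comm]

lemma hb_main {ι : Type} (s : Finset ι) (B : ι → Finset V) (m : ℕ)
    (hB : ∀ i ∈ s, (B i).card = m) {t : ℝ} (h0 : 0 < t) (h1 : t ≤ 1) (hs : s.Nonempty)
    (D : Finset V → ℝ) (hD : ∀ R R', R ⊆ R' → D R ≤ D R') {C : ℝ} (hD0 : ∀ R, 0 ≤ D R)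
    (hDC : ∀ R, D R ≤ C) {σ : ℝ} (hσ : 0 < σ) :
    ∑ i ∈ s, D (B i) ≤ s.card * hbE t D + C * (σ * s.card +
      (((s ×ˢ s).filter (fun q => ¬ Disjoint (B q.1) (B q.2))).card : ℝ) /
        (σ * s.card * t ^ (2 * m))) := by
  set W : ℝ := (((s ×ˢ s).filter (fun q => ¬ Disjoint (B q.1) (B q.2))).card : ℝ) with hW
  set J : Finset V → ℝ := fun R => ∑ i ∈ s, if B i ⊆ R then (1 : ℝ) else 0 with hJ
  have hsc : (0 : ℝ) < s.card := by exact_mod_cast hs.card_pos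
  set μ : ℝ := s.card * t ^ m with hμ
  have hμ0 : 0 < μ := by positivity
  have hC : 0 ≤ C := (hD0 ∅).trans (hDC ∅)
  have hEJ : hbE t J = μ := by
    rw [hJ, hbE_sum]
    simp only [hbE_sub]
    rw [Finset.sum_congr rfl (fun i hi => by rw [hB i hi])]
    simp [hμ]
  have hEJ2 : hbE t (fun R => J R ^ 2) ≤ μ ^ 2 + W := by
    have e : ∀ R, J R ^ 2 = ∑ q ∈ s ×ˢ s, if B q.1 ∪ B q.2 ⊆ R then (1 : ℝ) else 0 := by
      intro R
      rw [hJ, sq, Finset.sum_mul_sum, Finset.sum_product]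
      refine Finset.sum_congr rfl fun i _ => Finset.sum_congr rfl fun j _ => ?_
      simp only [Finset.union_subset_iff, ite_and]
      split_ifs <;> simp
    simp only [e]
    rw [hbE_sum]
    simp only [hbE_sub]
    have h3 : ∀ q ∈ s ×ˢ s, t ^ (B q.1 ∪ B q.2).card ≤
        t ^ (2 * m) + if ¬ Disjoint (B q.1) (B q.2) then (1 : ℝ) else 0 := by
      intro q hq
      obtain ⟨hq1, hq2⟩ := Finset.mem_product.1 hq
      by_cases hd : Disjoint (B q.1) (B q.2)
      · rw [Finset.card_union_of_disjoint hd, hB _ hq1, hB _ hq2, two_mul]; simp [hd]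
      · rw [if_pos hd]
        have : t ^ (B q.1 ∪ B q.2).card ≤ 1 := pow_le_one₀ h0.le h1
        have : 0 ≤ t ^ (2 * m) := by positivity
        linarith
    refine (Finset.sum_le_sum h3).trans (le_of_eq ?_)
    rw [Finset.sum_add_distrib, Finset.sum_const, Finset.card_product, ← Finset.sum_filter,
      Finset.sum_const, hW, hμ]
    simp only [nsmul_eq_mul, Nat.cast_mul, mul_one]
    ring
  have hpt : ∀ R, ∑ i ∈ s, D (B i) * (if B i ⊆ R then (1 : ℝ) else 0) ≤
      μ * D R + C * (σ * μ) + (C / (σ * μ)) * (J R ^ 2 + (-2 * μ) * J R + μ ^ 2) := by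
    intro R
    have a1 : ∑ i ∈ s, D (B i) * (if B i ⊆ R then (1 : ℝ) else 0) ≤ J R * D R := by
      rw [hJ, Finset.sum_mul]
      refine Finset.sum_le_sum fun i _ => ?_
      split_ifs with h
      · rw [mul_one, one_mul]; exact hD _ _ h
      · simp
    have a2 : J R * D R ≤ μ * D R + C * |J R - μ| := by
      have : (J R - μ) * D R ≤ |J R - μ| * C := by
        calc (J R - μ) * D R ≤ |J R - μ| * D R :=
              mul_le_mul_of_nonneg_right (le_abs_self _) (hD0 R)
          _ ≤ |J R - μ| * C := mul_le_mul_of_nonneg_left (hDC R) (abs_nonneg _)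
      linarith
    have a3 : |J R - μ| ≤ σ * μ + (J R - μ) ^ 2 / (σ * μ) := by
      have hp : 0 < σ * μ := by positivity
      rw [← sq_abs (J R - μ)]
      have hx := abs_nonneg (J R - μ)
      set x := |J R - μ|
      have : x * (σ * μ) ≤ (σ * μ) ^ 2 + x ^ 2 := by nlinarith [sq_nonneg (x - σ * μ)]
      calc x = (x * (σ * μ)) / (σ * μ) := by field_simp
        _ ≤ ((σ * μ) ^ 2 + x ^ 2) / (σ * μ) := by gcongr
        _ = _ := by field_simp
    have a4 := mul_le_mul_of_nonneg_left a3 hC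
    calc _ ≤ _ := a1
      _ ≤ _ := a2
      _ ≤ μ * D R + C * (σ * μ + (J R - μ) ^ 2 / (σ * μ)) := by linarith
      _ = _ := by ring
  have hE := hbE_mono h0.le h1 hpt
  rw [hbE_sum, hbE_add, hbE_add, hbE_mul, hbE_const, hbE_mul, hbE_add, hbE_add, hbE_mul, hEJ,
    hbE_const] at hE
  simp only [hbE_mul, hbE_sub] at hE
  have hl : ∑ i ∈ s, D (B i) * t ^ (B i).card = t ^ m * ∑ i ∈ s, D (B i) := by
    rw [Finset.mul_sum]
    exact Finset.sum_congr rfl fun i hi => by rw [hB i hi, mul_comm]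
  rw [hl] at hE
  have hE2 : t ^ m * ∑ i ∈ s, D (B i) ≤ μ * hbE t D + C * (σ * μ) + C / (σ * μ) * W := by
    refine hE.trans ?_
    have : C / (σ * μ) * (hbE t (fun R => J R ^ 2) + -2 * μ * μ + μ ^ 2) ≤ C / (σ * μ) * W := by
      refine mul_le_mul_of_nonneg_left ?_ (by positivity)
      nlinarith
    change μ * hbE t D + _ + _ ≤ _
    linarith
  have htm : 0 < t ^ m := by positivity
  rw [← mul_le_mul_iff_right₀ htm]
  refine hE2.trans (le_of_eq ?_)
  rw [hμ, pow_mul', sq]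
  field_simp
  ring

end Bern

/-! ### Section C: combinatorics of embeddings -/
section Comb

variable {U V : Type} [Fintype U] [DecidableEq U] [Fintype V] [DecidableEq V]

lemma hk_double (emb : Finset (U → V)) (hinj : ∀ φ ∈ emb, Function.Injective φ)
    (F : (U → V) → V → ℝ) :
    ∑ φ ∈ emb, ∑ j : U, F φ (φ j) =
      ∑ v : V, ∑ φ ∈ emb.filter (fun φ => v ∈ Finset.univ.image φ), F φ v := by
  simp only [Finset.sum_filter]
  conv_rhs => rw [Finset.sum_comm]
  refine Finset.sum_congr rfl fun φ hφ => ?_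
  rw [← Finset.sum_filter]
  have : Finset.univ.filter (fun v => v ∈ Finset.univ.image φ) = Finset.univ.image φ := by
    ext v; simp
  rw [this, Finset.sum_image ((hinj φ hφ).injOn)]

lemma hk_count (emb : Finset (U → V)) (hinj : ∀ φ ∈ emb, Function.Injective φ) (k : ℕ)
    (hk : ∀ v : V, (emb.filter (fun φ => v ∈ Finset.univ.image φ)).card = k) :
    (emb.card : ℝ) * Fintype.card U = k * Fintype.card V := by
  have := hk_double emb hinj (fun _ _ => 1)
  simp only [Finset.sum_const, nsmul_eq_mul, mul_one, hk, Finset.card_univ] at this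
  linarith

lemma hk_inter (emb : Finset (U → V)) (hinj : ∀ φ ∈ emb, Function.Injective φ) :
    ((emb ×ˢ emb).filter (fun p => 1 < ((Finset.univ.image p.1) ∩ (Finset.univ.image p.2)).card)).card
    ≤ ((emb ×ˢ emb).filter (fun p =>
    1 < ((Finset.univ.image p.1) ∩ (Finset.univ.image p.2)).card ∧
    ((Finset.univ.image p.1) ∩ (Finset.univ.image p.2)).card < Fintype.card U)).card
    + emb.card * (Fintype.card U) ^ (Fintype.card U) := by
  have hsub : (emb ×ˢ emb).filter (fun p => 1 < ((Finset.univ.image p.1) ∩ (Finset.univ.image p.2)).card)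
    ⊆ (emb ×ˢ emb).filter (fun p =>
    1 < ((Finset.univ.image p.1) ∩ (Finset.univ.image p.2)).card ∧
    ((Finset.univ.image p.1) ∩ (Finset.univ.image p.2)).card < Fintype.card U) ∪
    emb.biUnion (fun φ => (Fintype.piFinset (fun _ : U => Finset.univ.image φ)).image (fun ψ => (φ, ψ))) := by
    rintro ⟨φ, ψ⟩ h
    simp only [Finset.mem_filter, Finset.mem_product] at h
    obtain ⟨⟨h1, h2⟩, h3⟩ := h
    by_cases hc : ((Finset.univ.image φ) ∩ (Finset.univ.image ψ)).card < Fintype.card U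
    · refine Finset.mem_union_left _ ?_
      simp only [Finset.mem_filter, Finset.mem_product]
      exact ⟨⟨h1, h2⟩, h3, hc⟩
    · refine Finset.mem_union_right _ ?_
      simp only [Finset.mem_biUnion, Finset.mem_image, Fintype.mem_piFinset]
      refine ⟨φ, h1, ψ, ?_, rfl⟩
      have hcard : (Finset.univ.image ψ).card = Fintype.card U := by
        rw [Finset.card_image_of_injective _ (hinj ψ h2), Finset.card_univ]
      have : (Finset.univ.image φ) ∩ (Finset.univ.image ψ) = Finset.univ.image ψ :=
        Finset.eq_of_subset_of_card_le Finset.inter_subset_right (by rw [hcard]; exact not_lt.1 hc)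
      intro a
      have ha : ψ a ∈ Finset.univ.image ψ := Finset.mem_image_of_mem _ (Finset.mem_univ a)
      rw [← this] at ha
      simpa using (Finset.mem_inter.1 ha).1
  refine (Finset.card_le_card hsub).trans ((Finset.card_union_le _ _).trans ?_)
  gcongr
  refine Finset.card_biUnion_le_card_mul _ _ _ fun φ hφ => ?_
  refine Finset.card_image_le.trans ?_
  rw [Fintype.card_piFinset]
  simp only [Finset.prod_const, Finset.card_univ]
  gcongr
  exact Finset.card_image_le.trans (by simp)

lemma hk_main [Nonempty U] (emb : Finset (U → V)) (hinj : ∀ φ ∈ emb, Function.Injective φ)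
    (k : ℕ) (hk0 : 0 < k)
    (hk : ∀ v : V, (emb.filter (fun φ => v ∈ Finset.univ.image φ)).card = k)
    (D : V → Finset V → ℝ) (hD : ∀ v R R', R ⊆ R' → D v R ≤ D v R') {C : ℝ}
    (hD0 : ∀ v R, 0 ≤ D v R) (hDC : ∀ v R, D v R ≤ C) (hC : 0 ≤ C)
    {l : ℝ} (hl : ∀ R : Finset V, ∑ v, D v R ≤ l * R.card)
    {t : ℝ} (h0 : 0 < t) (h1 : t ≤ 1) {σ : ℝ} (hσ : 0 < σ) :
    ∑ φ ∈ emb, ∑ j : U, D (φ j) ((Finset.univ.image φ).erase (φ j)) ≤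
      k * (l * (t * Fintype.card V)) + C * (σ * k * Fintype.card V +
        (Fintype.card U * (((emb ×ˢ emb).filter (fun p =>
          1 < ((Finset.univ.image p.1) ∩ (Finset.univ.image p.2)).card)).card : ℝ)) /
          (σ * k * t ^ (2 * (Fintype.card U - 1)))) := by
  set m := Fintype.card U - 1 with hm
  rw [hk_double emb hinj (fun φ v => D v ((Finset.univ.image φ).erase v))]
  set s : V → Finset (U → V) := fun v => emb.filter (fun φ => v ∈ Finset.univ.image φ) with hs
  set W : V → ℝ := fun v => (((s v ×ˢ s v).filter (fun q => ¬ Disjoint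
    ((Finset.univ.image q.1).erase v) ((Finset.univ.image q.2).erase v))).card : ℝ) with hW
  have hkR : (0 : ℝ) < k := by exact_mod_cast hk0
  have hv : ∀ v : V, ∑ φ ∈ s v, D v ((Finset.univ.image φ).erase v) ≤
      k * hbE t (D v) + C * (σ * k + W v / (σ * k * t ^ (2 * m))) := by
    intro v
    have := hb_main (s v) (fun φ => (Finset.univ.image φ).erase v) m ?_ h0 h1 ?_ (D v) (hD v)
      (hD0 v) (hDC v) hσ
    · rwa [hk v] at this
    · intro φ hφ
      obtain ⟨h1, h2⟩ := Finset.mem_filter.1 hφ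
      rw [Finset.card_erase_of_mem h2, Finset.card_image_of_injective _ (hinj φ h1),
        Finset.card_univ]
    · rw [← Finset.card_pos, hk v]; exact hk0
  refine (Finset.sum_le_sum fun v _ => hv v).trans ?_
  have hsumW : ∑ v, W v ≤ Fintype.card U * (((emb ×ˢ emb).filter (fun p =>
          1 < ((Finset.univ.image p.1) ∩ (Finset.univ.image p.2)).card)).card : ℝ) := by
    have e1 : ∀ v, W v ≤ ∑ q ∈ (emb ×ˢ emb).filter (fun p =>
          1 < ((Finset.univ.image p.1) ∩ (Finset.univ.image p.2)).card),
          if v ∈ Finset.univ.image q.1 then (1 : ℝ) else 0 := by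
      intro v
      rw [← Finset.sum_filter, Finset.sum_const, nsmul_eq_mul, mul_one]
      refine Nat.cast_le.2 (Finset.card_le_card ?_)
      rintro ⟨φ, ψ⟩ h
      simp only [hs, Finset.mem_filter, Finset.mem_product] at h ⊢
      obtain ⟨⟨⟨a1, a2⟩, a3, a4⟩, a5⟩ := h
      refine ⟨⟨⟨a1, a3⟩, ?_⟩, a2⟩
      obtain ⟨u, hu1, hu2⟩ := Finset.not_disjoint_iff.1 a5
      rw [Finset.one_lt_card]
      exact ⟨v, Finset.mem_inter.2 ⟨a2, a4⟩, u,
        Finset.mem_inter.2 ⟨Finset.mem_of_mem_erase hu1, Finset.mem_of_mem_erase hu2⟩,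
        (Finset.ne_of_mem_erase hu1).symm⟩
    refine (Finset.sum_le_sum fun v _ => e1 v).trans ?_
    rw [Finset.sum_comm, mul_comm, ← nsmul_eq_mul]
    refine Finset.sum_le_card_nsmul _ _ _ fun q hq => ?_
    rw [← Finset.sum_filter, Finset.sum_const, nsmul_eq_mul, mul_one]
    norm_cast
    have : Finset.univ.filter (fun v => v ∈ Finset.univ.image q.1) = Finset.univ.image q.1 := by
      ext v; simp
    rw [this]
    exact Finset.card_image_le.trans (by simp)
  have hsumD : ∑ v, hbE t (D v) ≤ l * (t * Fintype.card V) := by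
    rw [← hbE_sum, ← hbE_card, ← hbE_mul]
    exact hbE_mono h0.le h1 hl
  have hden : 0 < σ * k * t ^ (2 * m) := by positivity
  rw [Finset.sum_add_distrib, ← Finset.mul_sum, ← Finset.mul_sum, Finset.sum_add_distrib,
    ← Finset.sum_div, Finset.sum_const, Finset.card_univ, nsmul_eq_mul]
  have b1 := mul_le_mul_of_nonneg_left hsumD hkR.le
  have b2 : (∑ v, W v) / (σ * k * t ^ (2 * m)) ≤ (Fintype.card U * (((emb ×ˢ emb).filter (fun p =>
          1 < ((Finset.univ.image p.1) ∩ (Finset.univ.image p.2)).card)).card : ℝ)) /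
          (σ * k * t ^ (2 * m)) := by gcongr
  have b3 : (Fintype.card V : ℝ) * (σ * k) = σ * k * Fintype.card V := by ring
  rw [b3]
  gcongr

end Comb

/-! ### Section D: choice of the conditioning set -/
section Choice

variable {U V K : Type} [Fintype U] [DecidableEq U] [Fintype V] [DecidableEq V]
  [Fintype K] [DecidableEq K]

/-- indicator of `y v = a` -/
def hdF (v : V) (a : K) (y : V → K) : ℝ := if y v = a then 1 else 0

lemma hdF_nonneg (v : V) (a : K) (y : V → K) : 0 ≤ hdF v a y := by
  unfold hdF; split_ifs <;> norm_num

lemma hdF_le_one (v : V) (a : K) (y : V → K) : hdF v a y ≤ 1 := by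
  unfold hdF; split_ifs <;> norm_num

/-- energy increment -/
def hdD (p : (V → K) → ℝ) (T : Finset V) (v : V) (R : Finset V) : ℝ :=
  ∑ a : K, (hcEn p (T ∪ R) (hdF v a) - hcEn p T (hdF v a))

lemma hdD_mono {p : (V → K) → ℝ} (hp : ∀ z, 0 ≤ p z) (T : Finset V) (v : V) (R R' : Finset V)
    (h : R ⊆ R') : hdD p T v R ≤ hdD p T v R' := by
  refine Finset.sum_le_sum fun a _ => ?_
  have := hcEn_mono hp (Finset.union_subset_union_right (s := T) h) (hdF v a)
  linarith

lemma hdD_nonneg {p : (V → K) → ℝ} (hp : ∀ z, 0 ≤ p z) (T : Finset V) (v : V) (R : Finset V) :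
    0 ≤ hdD p T v R :=
  Finset.sum_nonneg fun a _ => sub_nonneg.2 (hcEn_mono hp Finset.subset_union_left _)

lemma hdD_le {p : (V → K) → ℝ} (hp : ∀ z, 0 ≤ p z) (h1 : ∑ z, p z = 1)
    (T : Finset V) (v : V) (R : Finset V) :
    hdD p T v R ≤ Fintype.card K := by
  have : ∀ a ∈ (Finset.univ : Finset K),
      hcEn p (T ∪ R) (hdF v a) - hcEn p T (hdF v a) ≤ 1 := by
    intro a _
    have a1 := hcEn_le_one hp h1 (T ∪ R) (hdF_nonneg v a) (hdF_le_one v a)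
    have a2 := hcEn_nonneg hp T (hdF v a)
    linarith
  have := Finset.sum_le_card_nsmul _ _ _ this
  simpa [hdD] using this

lemma hd_choice {p : (V → K) → ℝ} (hp : ∀ z, 0 ≤ p z) (h1 : ∑ z, p z = 1) (l : ℝ) (hl : 0 ≤ l) :
    ∃ T : Finset V, l * T.card ≤ Fintype.card V * Fintype.card K ∧
      ∀ R : Finset V, ∑ v, hdD p T v R ≤ l * R.card := by
  obtain ⟨T, -, hT⟩ := Finset.exists_max_image (Finset.univ : Finset (Finset V))
    (fun T => ∑ v, ∑ a, hcEn p T (hdF v a) - l * T.card) Finset.univ_nonempty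
  refine ⟨T, ?_, ?_⟩
  · have h := hT ∅ (Finset.mem_univ _)
    simp only [Finset.card_empty, Nat.cast_zero, mul_zero, sub_zero] at h
    have h0 : 0 ≤ ∑ v, ∑ a, hcEn p ∅ (hdF (K := K) (V := V) v a) :=
      Finset.sum_nonneg fun v _ => Finset.sum_nonneg fun a _ => hcEn_nonneg hp _ _
    have h2 : ∑ v, ∑ a, hcEn p T (hdF (K := K) (V := V) v a) ≤ ∑ v : V, ∑ a : K, 1 :=
      Finset.sum_le_sum fun v _ => Finset.sum_le_sum fun a _ =>
        hcEn_le_one hp h1 T (hdF_nonneg v a) (hdF_le_one v a)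
    simp only [Finset.sum_const, Finset.card_univ, nsmul_eq_mul, mul_one] at h2
    linarith
  · intro R
    have h := hT (T ∪ R) (Finset.mem_univ _)
    have hc : ((T ∪ R).card : ℝ) ≤ T.card + R.card := by
      exact_mod_cast Finset.card_union_le T R
    have := mul_le_mul_of_nonneg_left hc hl
    simp only [hdD, Finset.sum_sub_distrib] at h ⊢
    linarith

lemma hd_phi {p : (V → K) → ℝ} (hp : ∀ z, 0 ≤ p z) (h1 : ∑ z, p z = 1) (T : Finset V)
    (φ : U → V) (hφ : Function.Injective φ) (A : Finset (U → K)) {σ : ℝ} (hσ : 0 < σ) :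
    hcEx p (fun z => ∑ a ∈ A, ∏ j, hcCe p T (hdF (φ j) (a j)) z) ≤
      hcEx p (fun y => if (fun j => y (φ j)) ∈ A then 1 else 0) +
      (Fintype.card K : ℝ) ^ (Fintype.card U) * (Fintype.card U * σ +
        (∑ j, hdD p T (φ j) ((Finset.univ.image φ).erase (φ j))) / σ) := by
  have key : ∀ a ∈ A, hcEx p (fun z => ∏ j, hcCe p T (hdF (φ j) (a j)) z) ≤
      hcEx p (fun y => ∏ j, hdF (φ j) (a j) y) + (Fintype.card U * σ +
        (∑ j, hdD p T (φ j) ((Finset.univ.image φ).erase (φ j))) / σ) := by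
    intro a _
    have hdec := hc_prod_decouple hp h1 T (fun j => hdF (φ j) (a j))
      (fun j => T ∪ (Finset.univ.image φ).erase (φ j)) (fun j => Finset.subset_union_left)
      (by
        intro i j hij y z hyz
        have : y (φ j) = z (φ j) := by
          refine hyz _ (Finset.mem_union_right _ (Finset.mem_erase.2 ⟨?_, ?_⟩))
          · exact fun h => hij (hφ h).symm
          · simp
        simp only [hdF, this])
      (fun j => hdF_nonneg _ _) (fun j => hdF_le_one _ _) Finset.univ
    have hj : ∀ j : U, hcEx p (fun z => |hcCe p (T ∪ (Finset.univ.image φ).erase (φ j))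
        (hdF (φ j) (a j)) z - hcCe p T (hdF (φ j) (a j)) z|) ≤
        σ + hdD p T (φ j) ((Finset.univ.image φ).erase (φ j)) / σ := by
      intro j
      refine (hc_abs_le hp h1 Finset.subset_union_left _ hσ).trans ?_
      gcongr
      exact Finset.single_le_sum (f := fun a => hcEn p (T ∪ (Finset.univ.image φ).erase (φ j))
        (hdF (φ j) a) - hcEn p T (hdF (φ j) a))
        (fun a _ => sub_nonneg.2 (hcEn_mono hp Finset.subset_union_left _)) (Finset.mem_univ (a j))
    have hsum := hdec.trans (Finset.sum_le_sum fun j _ => hj j)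
    rw [Finset.sum_add_distrib, ← Finset.sum_div, Finset.sum_const, nsmul_eq_mul,
      Finset.card_univ] at hsum
    have e1 : hcEx p (fun y => ∏ j, hdF (φ j) (a j) y) =
        hcEx p (fun z => hcCe p T (fun y => ∏ j, hdF (φ j) (a j) y) z) := by
      have := hcEx_mul_ce hp (T := T) (fun y => ∏ j, hdF (φ j) (a j) y) (g := fun _ => 1)
        (fun _ _ _ => rfl)
      simp only [one_mul] at this
      exact this.symm
    rw [e1]
    refine le_trans ?_ (add_le_add_right hsum _)
    rw [← hcEx_add]
    refine hcEx_mono hp fun z => ?_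
    have := neg_abs_le (hcCe p T (fun y => ∏ i, hdF (φ i) (a i) y) z -
      ∏ i, hcCe p T (hdF (φ i) (a i)) z)
    linarith
  rw [hcEx_sum]
  refine (Finset.sum_le_sum key).trans ?_
  rw [Finset.sum_add_distrib, ← hcEx_sum, Finset.sum_const, nsmul_eq_mul]
  have e2 : (fun y : V → K => ∑ a ∈ A, ∏ j, hdF (φ j) (a j) y) =
      fun y => if (fun j => y (φ j)) ∈ A then (1 : ℝ) else 0 := by
    ext y
    have : ∀ a : U → K, ∏ j, hdF (φ j) (a j) y = if (fun j => y (φ j)) = a then (1 : ℝ) else 0 := by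
      intro a
      by_cases h : (fun j => y (φ j)) = a
      · rw [if_pos h]
        refine Finset.prod_eq_one fun j _ => ?_
        simp [hdF, ← h]
      · rw [if_neg h]
        obtain ⟨j, hj⟩ := Function.ne_iff.1 h
        exact Finset.prod_eq_zero (Finset.mem_univ j) (by simp [hdF, hj])
    simp only [this]
    simp
  rw [e2]
  have hA : (A.card : ℝ) ≤ (Fintype.card K : ℝ) ^ (Fintype.card U) := by
    have := Finset.card_le_univ A
    rw [Fintype.card_fun] at this
    exact_mod_cast this
  gcongr
  refine add_nonneg (by positivity) (div_nonneg (Finset.sum_nonneg fun j _ => hdD_nonneg hp _ _ _) hσ.le)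

/-- Existence of a good conditioning. -/
lemma hd_exists {p : (V → K) → ℝ} (hp : ∀ z, 0 ≤ p z) (h1 : ∑ z, p z = 1) (T : Finset V)
    (G : (V → K) → ℝ) (hG : ∀ z, 0 ≤ G z) {e : ℝ} (he : 0 < e) (hEG : hcEx p G ≤ e)
    (hK : 0 < Fintype.card K) :
    ∃ z, 0 < p z ∧ G z ≤ 2 * e ∧ 1 ≤ 2 * (Fintype.card K : ℝ) ^ T.card * hcMass p T z := by
  by_contra hcon
  push Not at hcon
  have hKT : (0 : ℝ) < (Fintype.card K : ℝ) ^ T.card := by positivity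
  set H : (V → K) → ℝ := fun z => e⁻¹ * G z +
    ((Fintype.card K : ℝ) ^ T.card)⁻¹ * (hcMass p T z)⁻¹ with hH
  have hEH : hcEx p H ≤ 2 := by
    rw [hH, hcEx_add, hcEx_const_mul, hcEx_const_mul]
    have a1 : e⁻¹ * hcEx p G ≤ 1 := by
      rw [inv_mul_le_iff₀ he]; simpa using hEG
    have a2 : ((Fintype.card K : ℝ) ^ T.card)⁻¹ * hcEx p (fun z => (hcMass p T z)⁻¹) ≤ 1 := by
      rw [inv_mul_le_iff₀ hKT]; simpa using hc_classes hp T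
    linarith
  have hlt : ∀ z, 0 < p z → 2 < H z := by
    intro z hz
    have hm : 0 < hcMass p T z := hz.trans_le (le_hcMass hp T z)
    have hG0 := hG z
    by_cases hg : G z ≤ 2 * e
    · have := hcon z hz hg
      have : 2 < ((Fintype.card K : ℝ) ^ T.card)⁻¹ * (hcMass p T z)⁻¹ := by
        rw [← mul_inv, lt_inv_comm₀ two_pos (by positivity)]
        linarith
      have : 0 ≤ e⁻¹ * G z := by positivity
      simp only [hH]; linarith
    · have : 2 < e⁻¹ * G z := by
        rw [lt_inv_mul_iff₀ he]; linarith
      have : 0 ≤ ((Fintype.card K : ℝ) ^ T.card)⁻¹ * (hcMass p T z)⁻¹ := by positivity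
      simp only [hH]; linarith
  have hex : ∃ z, 0 < p z := by
    by_contra h
    push Not at h
    have : ∑ z, p z ≤ 0 := Finset.sum_nonpos fun z _ => h z
    linarith
  obtain ⟨z0, hz0⟩ := hex
  have : hcEx p (fun _ => 2) < hcEx p H := by
    refine Finset.sum_lt_sum (fun z _ => ?_) ⟨z0, Finset.mem_univ _, ?_⟩
    · rcases (hp z).eq_or_lt with h | h
      · rw [← h]; simp
      · exact mul_le_mul_of_nonneg_left (hlt z h).le h.le
    · exact mul_lt_mul_of_pos_left (hlt z0 hz0) hz0
  rw [hcEx_const h1] at this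
  linarith

/-- Final counting. -/
lemma hd_count {p : (V → K) → ℝ} (hp : ∀ z, 0 ≤ p z) (T : Finset V) (z : V → K) (hz : 0 < p z)
    (w : K → ℝ) (hw : ∀ a, 0 ≤ w a) (hw1 : ∑ a, w a = 1) {β : ℝ} (hβ : 0 ≤ β)
    (hpw : ∀ y, β * p y ≤ ∏ v, w (y v)) {δ : ℝ} (hδ : 0 < δ) (hδ1 : δ < 1)
    (A : V → Finset K) (hA : ∀ v a, a ∈ A v ↔ δ * w a ≤ hcCe p T (hdF v a) z) :
    β * hcMass p T z * Real.exp (δ * Real.log δ * Fintype.card V) ≤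
      ∏ v, (∑ a ∈ A v, w a + δ) := by
  set g : V → K → ℝ := fun v a => if a ∈ A v then 1 else δ with hg
  have hg0 : ∀ v a, 0 < g v a := by
    intro v a; simp only [hg]; split_ifs <;> linarith
  have hm : 0 < hcMass p T z := hz.trans_le (le_hcMass hp T z)
  have hlogδ : Real.log δ < 0 := Real.log_neg hδ hδ1
  -- upper bound
  have up : β * ∑ y ∈ hcCls T z, p y * ∏ v, g v (y v) ≤ ∏ v, (∑ a ∈ A v, w a + δ) := by
    calc β * ∑ y ∈ hcCls T z, p y * ∏ v, g v (y v)
        = ∑ y ∈ hcCls T z, (β * p y) * ∏ v, g v (y v) := by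
          rw [Finset.mul_sum]; exact Finset.sum_congr rfl fun y _ => by ring
      _ ≤ ∑ y ∈ hcCls T z, (∏ v, w (y v)) * ∏ v, g v (y v) :=
          Finset.sum_le_sum fun y _ => mul_le_mul_of_nonneg_right (hpw y)
            (Finset.prod_nonneg fun v _ => (hg0 v _).le)
      _ ≤ ∑ y : V → K, (∏ v, w (y v)) * ∏ v, g v (y v) :=
          Finset.sum_le_sum_of_subset_of_nonneg (Finset.subset_univ _) fun y _ _ =>
            mul_nonneg (Finset.prod_nonneg fun v _ => hw _)
              (Finset.prod_nonneg fun v _ => (hg0 v _).le)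
      _ = ∑ y : V → K, ∏ v, (w (y v) * g v (y v)) := by
          simp only [Finset.prod_mul_distrib]
      _ = ∏ v, ∑ a, w a * g v a := by
          rw [Finset.prod_univ_sum]; simp
      _ ≤ _ := by
          refine Finset.prod_le_prod (fun v _ => Finset.sum_nonneg fun a _ =>
            mul_nonneg (hw a) (hg0 v a).le) fun v _ => ?_
          have : ∀ a, w a * g v a ≤ (if a ∈ A v then w a else 0) + δ * w a := by
            intro a
            simp only [hg]
            have := mul_nonneg hδ.le (hw a)
            split_ifs <;> linarith
          refine (Finset.sum_le_sum fun a _ => this a).trans (le_of_eq ?_)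
          rw [Finset.sum_add_distrib, ← Finset.mul_sum, hw1, mul_one]
          simp
  -- lower bound
  set M : ℝ := δ * Real.log δ * Fintype.card V with hM
  have hav : hcMass p T z * M ≤ ∑ y ∈ hcCls T z, p y * ∑ v, Real.log (g v (y v)) := by
    have e1 : ∀ y : V → K, ∑ v, Real.log (g v (y v)) =
        Real.log δ * ∑ v, ∑ a ∈ Finset.univ.filter (fun a => a ∉ A v), hdF v a y := by
      intro y
      rw [Finset.mul_sum]
      refine Finset.sum_congr rfl fun v _ => ?_
      simp only [hg, hdF]
      by_cases h : y v ∈ A v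
      · simp [h]
      · simp [h]
    simp only [e1]
    have e2 : ∑ y ∈ hcCls T z, p y * (Real.log δ * ∑ v, ∑ a ∈ Finset.univ.filter
        (fun a => a ∉ A v), hdF v a y) = Real.log δ * ∑ v, ∑ a ∈ Finset.univ.filter
        (fun a => a ∉ A v), hcMass p T z * hcCe p T (hdF v a) z := by
      have : ∀ v a, hcMass p T z * hcCe p T (hdF v a) z = ∑ y ∈ hcCls T z, p y * hdF v a y := by
        intro v a
        unfold hcCe
        field_simp
      simp only [this]
      rw [Finset.mul_sum]
      simp only [Finset.mul_sum]
      rw [Finset.sum_comm]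
      refine Finset.sum_congr rfl fun v _ => ?_
      rw [Finset.sum_comm]
      refine Finset.sum_congr rfl fun a _ => Finset.sum_congr rfl fun y _ => ?_
      ring
    rw [e2]
    have e3 : ∑ v, ∑ a ∈ Finset.univ.filter
        (fun a => a ∉ A v), hcMass p T z * hcCe p T (hdF v a) z ≤
        hcMass p T z * (δ * Fintype.card V) := by
      have : ∀ v ∈ (Finset.univ : Finset V), ∑ a ∈ Finset.univ.filter
        (fun a => a ∉ A v), hcMass p T z * hcCe p T (hdF v a) z ≤ hcMass p T z * δ := by
        intro v _
        rw [← Finset.mul_sum]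
        refine mul_le_mul_of_nonneg_left ?_ hm.le
        calc ∑ a ∈ Finset.univ.filter (fun a => a ∉ A v), hcCe p T (hdF v a) z
            ≤ ∑ a ∈ Finset.univ.filter (fun a => a ∉ A v), δ * w a := by
              refine Finset.sum_le_sum fun a ha => ?_
              have := (Finset.mem_filter.1 ha).2
              rw [hA] at this
              exact (not_le.1 this).le
          _ ≤ ∑ a, δ * w a := Finset.sum_le_sum_of_subset_of_nonneg (Finset.subset_univ _)
              fun a _ _ => mul_nonneg hδ.le (hw a)
          _ = δ := by rw [← Finset.mul_sum, hw1, mul_one]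
      have := Finset.sum_le_card_nsmul _ _ _ this
      rw [nsmul_eq_mul, Finset.card_univ] at this
      linarith
    have := mul_le_mul_of_nonpos_left e3 hlogδ.le
    rw [hM]
    linarith
  have low : hcMass p T z * Real.exp M ≤ ∑ y ∈ hcCls T z, p y * ∏ v, g v (y v) := by
    have hpt : ∀ y ∈ hcCls T z, Real.exp M * (p y * (1 - M)) + Real.exp M *
        (p y * ∑ v, Real.log (g v (y v))) ≤ p y * ∏ v, g v (y v) := by
      intro y _
      have : ∏ v, g v (y v) = Real.exp (∑ v, Real.log (g v (y v))) := by
        rw [Real.exp_sum]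
        exact Finset.prod_congr rfl fun v _ => (Real.exp_log (hg0 v _)).symm
      rw [this]
      set L := ∑ v, Real.log (g v (y v))
      have h1 := Real.add_one_le_exp (L - M)
      have h2 : Real.exp L = Real.exp M * Real.exp (L - M) := by
        rw [← Real.exp_add]; ring_nf
      rw [h2]
      have h3 : Real.exp M * (L - M + 1) ≤ Real.exp M * Real.exp (L - M) :=
        mul_le_mul_of_nonneg_left h1 (Real.exp_pos M).le
      have := mul_le_mul_of_nonneg_left h3 (hp y)
      linarith
    refine le_trans ?_ (Finset.sum_le_sum hpt)
    rw [Finset.sum_add_distrib, ← Finset.mul_sum, ← Finset.mul_sum, ← Finset.sum_mul]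
    change _ ≤ Real.exp M * (hcMass p T z * (1 - M)) + _
    have := mul_le_mul_of_nonneg_left hav (Real.exp_pos M).le
    linarith
  calc β * hcMass p T z * Real.exp M = β * (hcMass p T z * Real.exp M) := by ring
    _ ≤ _ := mul_le_mul_of_nonneg_left low hβ
    _ ≤ _ := up

lemma hd_prod_add {ι : Type} [DecidableEq ι] (s : Finset ι) (α : ι → ℝ) (h0 : ∀ i, 0 ≤ α i)
    (h1 : ∀ i, α i ≤ 1) {δ : ℝ} (hδ : 0 ≤ δ) (hδ1 : δ ≤ 1) :
    ∏ i ∈ s, (α i + δ) ≤ ∏ i ∈ s, α i + (2 ^ s.card - 1) * δ ∧ ∏ i ∈ s, (α i + δ) ≤ 2 ^ s.card := by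
  induction s using Finset.induction_on with
  | empty => simp
  | insert i s hi ih =>
    obtain ⟨ih1, ih2⟩ := ih
    rw [Finset.prod_insert hi, Finset.prod_insert hi, Finset.card_insert_of_notMem hi, pow_succ]
    have hP : 0 ≤ ∏ i ∈ s, (α i + δ) := Finset.prod_nonneg fun j _ => add_nonneg (h0 j) hδ
    have h2 : (1 : ℝ) ≤ 2 ^ s.card := one_le_pow₀ (by norm_num)
    constructor
    · have a1 := mul_le_mul_of_nonneg_left ih1 (h0 i)
      have a2 : α i * ((2 ^ s.card - 1) * δ) ≤ (2 ^ s.card - 1) * δ :=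
        mul_le_of_le_one_left (mul_nonneg (by linarith) hδ) (h1 i)
      have a3 := mul_le_mul_of_nonneg_left ih2 hδ
      nlinarith
    · have : α i + δ ≤ 2 := by linarith [h1 i]
      calc (α i + δ) * ∏ i ∈ s, (α i + δ) ≤ 2 * 2 ^ s.card := by
            gcongr
        _ = _ := by ring

end Choice

/-! ### Section E: the discrete counting theorem -/
section Discrete

variable {U V K : Type} [Fintype U] [DecidableEq U] [Fintype V] [DecidableEq V]
  [Fintype K] [DecidableEq K]

lemma he_final [Nonempty U] (emb : Finset (U → V)) (hinj : ∀ φ ∈ emb, Function.Injective φ)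
    (k : ℕ) (hk0 : 0 < k)
    (hk : ∀ v : V, (emb.filter (fun φ => v ∈ Finset.univ.image φ)).card = k)
    (α : V → ℝ) (h0 : ∀ v, 0 ≤ α v) (h1 : ∀ v, α v ≤ 1) {δ : ℝ} (hδ : 0 < δ) (hδ1 : δ < 1)
    {b3 κ : ℝ} (hb3 : 0 ≤ b3) (bad : Finset (U → V)) (hsub : bad ⊆ emb)
    (hbad : (bad.card : ℝ) ≤ κ * emb.card)
    (hgood : ∀ φ ∈ emb, φ ∉ bad → ∏ j, (α (φ j) + δ) ≤ Real.exp (-(b3 * Fintype.card U))) :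
    ∏ v, (α v + δ) ≤ Real.exp ((-b3 + κ * (b3 + Real.log 2)) * Fintype.card V) := by
  have hpos : ∀ v, 0 < α v + δ := fun v => by linarith [h0 v]
  rw [← Real.log_le_iff_le_exp (Finset.prod_pos fun v _ => hpos v),
    Real.log_prod fun v _ => (hpos v).ne']
  have hd := hk_double emb hinj (fun _ v => Real.log (α v + δ))
  simp only [Finset.sum_const, nsmul_eq_mul, hk] at hd
  rw [← Finset.mul_sum] at hd
  have hc := hk_count emb hinj k hk
  have hkR : (0 : ℝ) < k := by exact_mod_cast hk0
  have hlog2 : 0 ≤ Real.log 2 := Real.log_nonneg (by norm_num)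
  set r : ℝ := (Fintype.card U : ℝ) with hr
  have hr0 : 0 ≤ r := by positivity
  have key : ∑ φ ∈ emb, ∑ j, Real.log (α (φ j) + δ) ≤
      ∑ φ ∈ emb, (-(b3 * r) + if φ ∈ bad then r * (b3 + Real.log 2) else 0) := by
    refine Finset.sum_le_sum fun φ hφ => ?_
    split_ifs with hb
    · have : ∑ j : U, Real.log (α (φ j) + δ) ≤ ∑ j : U, Real.log 2 :=
        Finset.sum_le_sum fun j _ => Real.log_le_log (hpos _) (by linarith [h1 (φ j)])
      simp only [Finset.sum_const, nsmul_eq_mul, Finset.card_univ] at this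
      rw [← hr] at this
      nlinarith
    · rw [← Real.log_prod fun j _ => (hpos _).ne', add_zero,
        Real.log_le_iff_le_exp (Finset.prod_pos fun v _ => hpos _)]
      exact hgood φ hφ hb
  rw [Finset.sum_add_distrib, ← Finset.sum_filter, Finset.sum_const, Finset.sum_const,
    Finset.filter_mem_eq_inter, Finset.inter_eq_right.mpr hsub, nsmul_eq_mul, nsmul_eq_mul, hd] at key
  have h2 : (bad.card : ℝ) * (r * (b3 + Real.log 2)) ≤ κ * emb.card * (r * (b3 + Real.log 2)) :=
    mul_le_mul_of_nonneg_right hbad (by positivity)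
  have h3 : k * ∑ v, Real.log (α v + δ) ≤
      k * ((-b3 + κ * (b3 + Real.log 2)) * Fintype.card V) := by
    calc _ ≤ _ := key
      _ ≤ emb.card * (-(b3 * r)) + κ * emb.card * (r * (b3 + Real.log 2)) := by linarith
      _ = (emb.card * r) * (-b3 + κ * (b3 + Real.log 2)) := by ring
      _ = _ := by rw [hc]; ring
  exact le_of_mul_le_mul_left h3 hkR

lemma he_sub (F : Finset (U → K)) (A : U → Finset K) (w : K → ℝ) (hw : ∀ a, 0 ≤ w a) {δ : ℝ}
    (hδ : 0 ≤ δ) (g : U → K → ℝ) (hg : ∀ j a, 0 ≤ g j a) (hA : ∀ j, ∀ a ∈ A j, δ * w a ≤ g j a) :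
    δ ^ (Fintype.card U) * ∑ a ∈ F.filter (fun a => ∀ j, a j ∈ A j), ∏ j, w (a j) ≤
      ∑ a ∈ F, ∏ j, g j (a j) := by
  rw [Finset.mul_sum]
  have h1 : ∀ a ∈ F.filter (fun a => ∀ j, a j ∈ A j), δ ^ (Fintype.card U) * ∏ j, w (a j) ≤
      ∏ j, g j (a j) := by
    intro a ha
    have ha' := (Finset.mem_filter.mp ha).2
    rw [show δ ^ (Fintype.card U) * ∏ j, w (a j) = ∏ j : U, (δ * w (a j)) by
      rw [Finset.prod_mul_distrib, Finset.prod_const, Finset.card_univ]]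
    exact Finset.prod_le_prod (fun j _ => mul_nonneg hδ (hw _)) fun j _ => hA j _ (ha' j)
  refine (Finset.sum_le_sum h1).trans ?_
  exact Finset.sum_le_sum_of_subset_of_nonneg (Finset.filter_subset _ F)
    (fun a _ _ => Finset.prod_nonneg fun j _ => hg j _)

set_option maxHeartbeats 1000000 in
lemma he_main [Nonempty U] [Nonempty K] (emb : Finset (U → V))
    (hinj : ∀ φ ∈ emb, Function.Injective φ)
    (k : ℕ) (hk0 : 0 < k)
    (hk : ∀ v : V, (emb.filter (fun φ => v ∈ Finset.univ.image φ)).card = k)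
    (hemb : 0 < emb.card)
    {p : (V → K) → ℝ} (hp : ∀ z, 0 ≤ p z) (h1 : ∑ z, p z = 1)
    (w : K → ℝ) (hw : ∀ a, 0 ≤ w a) (hw1 : ∑ a, w a = 1) {β : ℝ} (hβ : 0 ≤ β)
    (hpw : ∀ y, β * p y ≤ ∏ v, w (y v))
    (F : Finset (U → K)) {ε0 ε' ε2 σ τ l t σ' δ κ b3 c : ℝ}
    (hF : ∑ φ ∈ emb, hcEx p (fun y => if (fun j => y (φ j)) ∈ F then 1 else 0) ≤ ε0 * emb.card)
    (hl : 0 ≤ l) (ht : 0 < t) (ht1 : t ≤ 1) (hσ : 0 < σ) (hσ' : 0 < σ') (hδ : 0 < δ) (hδ1 : δ < 1)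
    (hτ : (k : ℝ) * (l * (t * Fintype.card V)) + Fintype.card K * (σ' * k * Fintype.card V +
        (Fintype.card U * (((emb ×ˢ emb).filter (fun p =>
          1 < ((Finset.univ.image p.1) ∩ (Finset.univ.image p.2)).card)).card : ℝ)) /
          (σ' * k * t ^ (2 * (Fintype.card U - 1)))) ≤ τ * emb.card)
    (hε' : 0 < ε')
    (hε : ε0 + (Fintype.card K : ℝ) ^ (Fintype.card U) * (Fintype.card U * σ + τ / σ) ≤ ε')
    (hε2 : 0 < ε2) (hκ : 2 * ε' ≤ κ * (ε2 * δ ^ (Fintype.card U))) (hb3 : 0 ≤ b3)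
    (hbox : ∀ A : U → Finset K, ∑ a ∈ F.filter (fun a => ∀ j, a j ∈ A j), ∏ j, w (a j) ≤ ε2 →
      ∏ j, ∑ a ∈ A j, w a ≤ c)
    (hc : c + 2 ^ (Fintype.card U) * δ ≤ Real.exp (-(b3 * Fintype.card U))) :
    ∃ T : ℕ, l * T ≤ Fintype.card V * Fintype.card K ∧
      β * Real.exp (δ * Real.log δ * Fintype.card V) ≤ 2 * (Fintype.card K : ℝ) ^ T *
        Real.exp ((-b3 + κ * (b3 + Real.log 2)) * Fintype.card V) := by
  obtain ⟨T, hT1, hT2⟩ := hd_choice hp h1 l hl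
  refine ⟨T.card, hT1, ?_⟩
  set r := Fintype.card U with hr
  have hembR : (0 : ℝ) < emb.card := by exact_mod_cast hemb
  have hS := hk_main emb hinj k hk0 hk (hdD p T) (fun v R R' h => hdD_mono hp T v R R' h)
    (fun v R => hdD_nonneg hp T v R) (fun v R => hdD_le hp h1 T v R) (by positivity) hT2 ht ht1 hσ'
  have hS := hS.trans hτ
  set G : (V → K) → ℝ := fun z => ∑ φ ∈ emb, ∑ a ∈ F, ∏ j, hcCe p T (hdF (φ j) (a j)) z with hG
  have hG0 : ∀ z, 0 ≤ G z := fun z => Finset.sum_nonneg fun φ _ => Finset.sum_nonneg fun a _ =>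
    Finset.prod_nonneg fun j _ => hcCe_nonneg hp T (fun y => hdF_nonneg _ _ y) z
  have hEG : hcEx p G ≤ ε' * emb.card := by
    rw [hG, hcEx_sum]
    calc _ ≤ ∑ φ ∈ emb, (hcEx p (fun y => if (fun j => y (φ j)) ∈ F then 1 else 0) +
          (Fintype.card K : ℝ) ^ r * (r * σ +
          (∑ j, hdD p T (φ j) ((Finset.univ.image φ).erase (φ j))) / σ)) :=
          Finset.sum_le_sum fun φ hφ => hd_phi hp h1 T φ (hinj φ hφ) F hσ
      _ = ∑ φ ∈ emb, hcEx p (fun y => if (fun j => y (φ j)) ∈ F then 1 else 0) +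
          (Fintype.card K : ℝ) ^ r * (emb.card * (r * σ) +
          (∑ φ ∈ emb, ∑ j, hdD p T (φ j) ((Finset.univ.image φ).erase (φ j))) / σ) := by
          rw [Finset.sum_add_distrib, ← Finset.mul_sum, Finset.sum_add_distrib, Finset.sum_const,
            nsmul_eq_mul, Finset.sum_div]
      _ ≤ ε0 * emb.card + (Fintype.card K : ℝ) ^ r * (emb.card * (r * σ) + (τ * emb.card) / σ) := by
          gcongr
      _ = (ε0 + (Fintype.card K : ℝ) ^ r * (r * σ + τ / σ)) * emb.card := by ring
      _ ≤ _ := by gcongr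
  obtain ⟨z, hz, hGz, hmass⟩ := hd_exists hp h1 T G hG0 (e := ε' * emb.card) (by positivity) hEG
    Fintype.card_pos
  set A : V → Finset K := fun v => Finset.univ.filter (fun a => δ * w a ≤ hcCe p T (hdF v a) z)
    with hAdef
  have hA : ∀ v a, a ∈ A v ↔ δ * w a ≤ hcCe p T (hdF v a) z := by
    intro v a; simp [hAdef]
  have hcount := hd_count hp T z hz w hw hw1 hβ hpw hδ hδ1 A hA
  set α : V → ℝ := fun v => ∑ a ∈ A v, w a with hα
  have hα0 : ∀ v, 0 ≤ α v := fun v => Finset.sum_nonneg fun a _ => hw a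
  have hα1 : ∀ v, α v ≤ 1 := fun v => hw1 ▸
    Finset.sum_le_sum_of_subset_of_nonneg (Finset.subset_univ _) (fun a _ _ => hw a)
  set m : (U → V) → ℝ := fun φ => ∑ a ∈ F.filter (fun a => ∀ j, a j ∈ A (φ j)), ∏ j, w (a j)
    with hm
  have hm0 : ∀ φ, 0 ≤ m φ := fun φ => Finset.sum_nonneg fun a _ => Finset.prod_nonneg fun j _ => hw _
  have hmG : δ ^ r * ∑ φ ∈ emb, m φ ≤ G z := by
    have hGz' : G z = ∑ φ ∈ emb, ∑ a ∈ F, ∏ j, hcCe p T (hdF (φ j) (a j)) z := by rw [hG]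
    rw [Finset.mul_sum, hGz']
    refine Finset.sum_le_sum fun φ _ => ?_
    have hmφ : m φ = ∑ a ∈ F.filter (fun a => ∀ j, a j ∈ A (φ j)), ∏ j, w (a j) := by rw [hm]
    rw [hmφ]
    exact he_sub F (fun j => A (φ j)) w hw hδ.le (fun j a => hcCe p T (hdF (φ j) a) z)
      (fun j a => hcCe_nonneg hp T (fun y => hdF_nonneg _ _ y) z) (fun j a ha => (hA _ _).mp ha)
  set bad := emb.filter (fun φ => ε2 < m φ) with hbad
  have hbadc : (bad.card : ℝ) ≤ κ * emb.card := by
    have h2 : bad.card * ε2 ≤ ∑ φ ∈ emb, m φ := by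
      calc (bad.card : ℝ) * ε2 = ∑ φ ∈ bad, ε2 := by simp
        _ ≤ ∑ φ ∈ bad, m φ := Finset.sum_le_sum fun φ hφ => (Finset.mem_filter.mp hφ).2.le
        _ ≤ _ := Finset.sum_le_sum_of_subset_of_nonneg (Finset.filter_subset _ _) fun φ _ _ => hm0 φ
    have h3 : δ ^ r * (bad.card * ε2) ≤ 2 * (ε' * emb.card) :=
      (mul_le_mul_of_nonneg_left h2 (by positivity)).trans (hmG.trans hGz)
    have h4 : (ε2 * δ ^ r) * bad.card ≤ (ε2 * δ ^ r) * (κ * emb.card) := by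
      have := mul_le_mul_of_nonneg_right hκ hembR.le
      linarith
    exact le_of_mul_le_mul_left h4 (by positivity)
  have hfin := he_final emb hinj k hk0 hk α hα0 hα1 hδ hδ1 hb3 bad (Finset.filter_subset _ _) hbadc
    (fun φ hφ hnb => by
      have hmle : m φ ≤ ε2 := by
        by_contra hcon
        exact hnb (Finset.mem_filter.mpr ⟨hφ, not_le.mp hcon⟩)
      have h2 := hbox (fun j => A (φ j)) hmle
      have h3 := (hd_prod_add (Finset.univ : Finset U) (fun j => α (φ j)) (fun j => hα0 _)
        (fun j => hα1 _) hδ.le hδ1.le).1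
      rw [Finset.card_univ, ← hr] at h3
      refine h3.trans (le_trans ?_ hc)
      have : ∏ j, α (φ j) ≤ c := h2
      nlinarith)
  have h5 := hcount.trans hfin
  have hE := Real.exp_pos (δ * Real.log δ * Fintype.card V)
  have h6 : β * Real.exp (δ * Real.log δ * Fintype.card V) * 1 ≤
      β * Real.exp (δ * Real.log δ * Fintype.card V) * (2 * (Fintype.card K : ℝ) ^ T.card * hcMass p T z) :=
    mul_le_mul_of_nonneg_left hmass (by positivity)
  calc _ = β * Real.exp (δ * Real.log δ * Fintype.card V) * 1 := by ring
    _ ≤ _ := h6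
    _ = 2 * (Fintype.card K : ℝ) ^ T.card * (β * hcMass p T z * Real.exp (δ * Real.log δ * Fintype.card V)) := by ring
    _ ≤ _ := by gcongr

end Discrete

/-! ### Section F: consequences of goodness -/

lemma hf_tau (S : Ssee) (hS : S.Good) (N : ℕ) (hN : 1 < Fintype.card (S.V N)) {τ l C : ℝ}
    (hτ : 0 < τ) (hl : 0 ≤ l) (hC : 0 ≤ C) :
    ∃ t σ : ℝ, 0 < t ∧ t ≤ 1 ∧ 0 < σ ∧ ∀ᶠ n in atTop, N ≤ n ∧ 0 < (S.emb N n).card ∧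
      ∀ k : ℕ, 0 < k →
      (∀ v : S.V n, ((S.emb N n).filter (fun φ => v ∈ Finset.univ.image φ)).card = k) →
      (k : ℝ) * (l * (t * Fintype.card (S.V n))) + C * (σ * k * Fintype.card (S.V n) +
        (Fintype.card (S.V N) * (((S.emb N n ×ˢ S.emb N n).filter (fun p =>
          1 < ((Finset.univ.image p.1) ∩ (Finset.univ.image p.2)).card)).card : ℝ)) /
          (σ * k * t ^ (2 * (Fintype.card (S.V N) - 1)))) ≤ τ * (S.emb N n).card := by
  set r := Fintype.card (S.V N) with hr
  have hrR : (0 : ℝ) < r := by exact_mod_cast (by omega : 0 < r)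
  set t := min 1 (τ / (3 * r * (l + 1))) with ht
  set σ := τ / (3 * r * (C + 1)) with hσ
  have ht0 : 0 < t := lt_min one_pos (by positivity)
  have ht1 : t ≤ 1 := min_le_left _ _
  have hσ0 : 0 < σ := by positivity
  set m := 2 * (r - 1) with hm
  refine ⟨t, σ, ht0, ht1, hσ0, ?_⟩
  obtain ⟨g1, g2, g3⟩ := hS
  have hη : 0 < τ * (σ * t ^ m) / (6 * (C + 1)) := by positivity
  have e3 := (g3 N hN).eventually (gt_mem_nhds hη)
  have e2 := (g2 N hN).eventually_ge_atTop ((r : ℝ) ^ r / (τ * (σ * t ^ m) / (6 * (C + 1))))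
  have e2' := (g2 N hN).eventually_gt_atTop 0
  filter_upwards [e3, e2, e2', eventually_ge_atTop N] with n e3 e2 e2' hNn
  have hn : (0 : ℝ) < Fintype.card (S.V n) := by exact_mod_cast Fintype.card_pos
  have hE : (0 : ℝ) < (S.emb N n).card := by
    by_contra h
    have : ((S.emb N n).card : ℝ) = 0 := le_antisymm (not_lt.mp h) (by positivity)
    simp [this] at e2'
  refine ⟨hNn, by exact_mod_cast hE, ?_⟩
  intro k hk0 hk
  have hkR : (0 : ℝ) < k := by exact_mod_cast hk0
  have hc := hk_count (S.emb N n) (S.emb_inj N n hNn) k hk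
  have hin := hk_inter (S.emb N n) (S.emb_inj N n hNn)
  change _ ≤ S.interCount N n + (S.emb N n).card * r ^ r at hin
  rw [← hr] at hc
  have hin' : (((S.emb N n ×ˢ S.emb N n).filter (fun p =>
          1 < ((Finset.univ.image p.1) ∩ (Finset.univ.image p.2)).card)).card : ℝ) ≤
      S.interCount N n + ((S.emb N n).card : ℝ) * (r : ℝ) ^ r := by exact_mod_cast hin
  set E : ℝ := ((S.emb N n).card : ℝ) with hEdef
  set v : ℝ := (Fintype.card (S.V n) : ℝ) with hv
  set W : ℝ := (((S.emb N n ×ˢ S.emb N n).filter (fun p =>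
          1 < ((Finset.univ.image p.1) ∩ (Finset.univ.image p.2)).card)).card : ℝ) with hW
  set I : ℝ := (S.interCount N n : ℝ) with hI
  set η := τ * (σ * t ^ m) / (6 * (C + 1)) with hηd
  -- three terms
  have a1 : k * (l * (t * v)) ≤ τ / 3 * E := by
    have : t ≤ τ / (3 * r * (l + 1)) := min_le_right _ _
    have h2 : r * l * t ≤ τ / 3 := by
      calc r * l * t ≤ r * (l + 1) * (τ / (3 * r * (l + 1))) := by gcongr; linarith
        _ = τ / 3 := by field_simp
    calc k * (l * (t * v)) = (k * v) * (l * t) := by ring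
      _ = (r * l * t) * E := by rw [← hc]; ring
      _ ≤ _ := by gcongr
  have a2 : C * (σ * k * v) ≤ τ / 3 * E := by
    have h2 : C * σ * r ≤ τ / 3 := by
      calc C * σ * r ≤ (C + 1) * σ * r := by gcongr; linarith
        _ = τ / 3 := by rw [hσ]; field_simp
    calc C * (σ * k * v) = C * σ * (k * v) := by ring
      _ = (C * σ * r) * E := by rw [← hc]; ring
      _ ≤ _ := by gcongr
  have a3 : C * ((r * W) / (σ * k * t ^ m)) ≤ τ / 3 * E := by
    have h1 : v * W ≤ 2 * η * E ^ 2 := by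
      have b1 : v * I ≤ η * E ^ 2 := by
        rw [div_lt_iff₀ (by positivity)] at e3
        exact e3.le
      have b2 : v * (E * (r : ℝ) ^ r) ≤ η * E ^ 2 := by
        rw [le_div_iff₀ hn, div_mul_eq_mul_div, div_le_iff₀ hη] at e2
        nlinarith
      nlinarith
    have h2 : (r * W) / (σ * k * t ^ m) = (v * W) / (E * (σ * t ^ m)) := by
      have hkv : (k : ℝ) * v = E * r := hc.symm
      rw [div_eq_div_iff (by positivity) (by positivity)]
      linear_combination (-(W * σ * t ^ m)) * hkv
    rw [h2]
    calc C * (v * W / (E * (σ * t ^ m))) ≤ (C + 1) * (2 * η * E ^ 2 / (E * (σ * t ^ m))) := by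
          gcongr; linarith
      _ = τ / 3 * E := by rw [hηd]; field_simp; norm_num
  calc _ = k * (l * (t * v)) + C * (σ * k * v) + C * ((r * W) / (σ * k * t ^ m)) := by ring
    _ ≤ _ := by linarith

/-! ### Section G: independence and matchings -/
section Matching
variable {U V : Type} [Fintype U] [DecidableEq U] [Fintype V] [DecidableEq V]
  (μ : Measure ℝ) [IsProbabilityMeasure μ]

lemma hg_indep (A B : Set (V → ℝ)) (hA : MeasurableSet A) (hB : MeasurableSet B)
    (S T : Finset V) (hST : Disjoint S T)
    (hAS : ∀ x y : V → ℝ, (∀ v ∈ S, x v = y v) → x ∈ A → y ∈ A)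
    (hBT : ∀ x y : V → ℝ, (∀ v ∈ T, x v = y v) → x ∈ B → y ∈ B) :
    Measure.pi (fun _ : V => μ) (A ∩ B) =
      Measure.pi (fun _ : V => μ) A * Measure.pi (fun _ : V => μ) B := by
  have hi : ProbabilityTheory.iIndepFun (fun (v : V) (x : V → ℝ) => x v)
      (Measure.pi (fun _ : V => μ)) :=
    ProbabilityTheory.iIndepFun_pi (X := fun _ x => x) (fun _ => aemeasurable_id)
  have h := hi.indepFun_finset S T hST (fun v => measurable_pi_apply v)
  let ext : ∀ R : Finset V, (R → ℝ) → (V → ℝ) := fun R y v => if h : v ∈ R then y ⟨v, h⟩ else 0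
  have hext : ∀ R, Measurable (ext R) := by
    intro R
    refine measurable_pi_lambda _ fun v => ?_
    by_cases h : v ∈ R
    · simp only [ext, h, dif_pos]; exact measurable_pi_apply _
    · simp only [ext, h, dif_neg, not_false_iff]; exact measurable_const
  have key : ∀ (R : Finset V) (A : Set (V → ℝ)),
      (∀ x y : V → ℝ, (∀ v ∈ R, x v = y v) → x ∈ A → y ∈ A) →
      (fun (x : V → ℝ) (i : R) => x i) ⁻¹' (ext R ⁻¹' A) = A := by
    intro R A hA
    ext x
    simp only [mem_preimage]
    constructor
    · exact hA _ _ fun v hv => by simp [ext, hv]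
    · exact hA _ _ fun v hv => by simp [ext, hv]
  have h2 := h.measure_inter_preimage_eq_mul _ _ (hext S hA) (hext T hB)
  rwa [key S A hAS, key T B hBT] at h2

lemma hg_map (φ : U → V) (hφ : Function.Injective φ) :
    MeasurePreserving (fun (x : V → ℝ) (j : U) => x (φ j)) (Measure.pi (fun _ : V => μ))
      (Measure.pi (fun _ : U => μ)) := by
  refine ⟨measurable_pi_lambda _ fun j => measurable_pi_apply _, ?_⟩
  have hi : ProbabilityTheory.iIndepFun (fun (v : V) (x : V → ℝ) => x v)
      (Measure.pi (fun _ : V => μ)) :=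
    ProbabilityTheory.iIndepFun_pi (X := fun _ x => x) (fun _ => aemeasurable_id)
  have h2 := (hi.precomp hφ).map_fun_eq_pi_map (fun j => (measurable_pi_apply _).aemeasurable)
  rw [h2]
  congr 1
  funext j
  exact (measurePreserving_eval (fun _ : V => μ) (φ j)).map_eq

lemma hg_disj (G : Set (U → ℝ)) (hG : MeasurableSet G) (M : Finset (U → V))
    (hinj : ∀ φ ∈ M, Function.Injective φ)
    (hdis : ∀ φ ∈ M, ∀ ψ ∈ M, φ ≠ ψ → Disjoint (Finset.univ.image φ) (Finset.univ.image ψ)) :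
    Measure.pi (fun _ : V => μ) {x | ∀ φ ∈ M, (fun j => x (φ j)) ∈ G} =
      (Measure.pi (fun _ : U => μ) G) ^ M.card := by
  have hmeas : ∀ M : Finset (U → V), MeasurableSet {x : V → ℝ | ∀ φ ∈ M, (fun j => x (φ j)) ∈ G} := by
    intro M
    have : {x : V → ℝ | ∀ φ ∈ M, (fun j => x (φ j)) ∈ G} =
        ⋂ φ ∈ M, (fun (x : V → ℝ) (j : U) => x (φ j)) ⁻¹' G := by ext; simp
    rw [this]
    refine Finset.measurableSet_biInter _ fun φ _ => ?_
    exact (measurable_pi_lambda _ fun j => measurable_pi_apply _) hG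
  induction M using Finset.induction_on with
  | empty => simp
  | insert φ M hφ ih =>
    have e : {x : V → ℝ | ∀ ψ ∈ insert φ M, (fun j => x (ψ j)) ∈ G} =
        (fun (x : V → ℝ) (j : U) => x (φ j)) ⁻¹' G ∩ {x : V → ℝ | ∀ φ ∈ M, (fun j => x (φ j)) ∈ G} := by
      ext x; simp
    rw [e, hg_indep μ _ _ ((hg_map μ φ (hinj φ (by simp))).measurable hG) (hmeas M)
      (Finset.univ.image φ) (M.biUnion fun ψ => Finset.univ.image ψ), 
      ih (fun ψ h => hinj ψ (by simp [h])) (fun a ha b hb => hdis a (by simp [ha]) b (by simp [hb])),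
      (hg_map μ φ (hinj φ (by simp))).measure_preimage hG.nullMeasurableSet,
      Finset.card_insert_of_notMem hφ, pow_succ, mul_comm]
    · rw [Finset.disjoint_biUnion_right]
      intro ψ hψ
      exact hdis φ (by simp) ψ (by simp [hψ]) (fun h => hφ (h ▸ hψ))
    · intro x y h hx
      have : (fun j => x (φ j)) = fun j => y (φ j) := by
        funext j; exact h _ (by simp)
      simp only [mem_preimage] at hx ⊢
      rwa [← this]
    · intro x y h hx ψ hψ
      have : (fun j => x (ψ j)) = fun j => y (ψ j) := by
        funext j; exact h _ (by simp only [Finset.mem_biUnion]; exact ⟨ψ, hψ, by simp⟩)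
      rw [← this]; exact hx ψ hψ

/-- maximal matching -/
lemma hg_maxmatch [Nonempty U] (s : Finset (U → V)) (k : ℕ)
    (hk : ∀ v : V, (s.filter (fun φ => v ∈ Finset.univ.image φ)).card ≤ k) :
    ∃ M ⊆ s, (∀ φ ∈ M, ∀ ψ ∈ M, φ ≠ ψ → Disjoint (Finset.univ.image φ) (Finset.univ.image ψ)) ∧
      s.card ≤ M.card * Fintype.card U * k := by
  classical
  obtain ⟨M, hM, hmax⟩ := Finset.exists_max_image (s.powerset.filter (fun M => 
    ∀ φ ∈ M, ∀ ψ ∈ M, φ ≠ ψ → Disjoint (Finset.univ.image φ) (Finset.univ.image ψ)))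
    (fun M => M.card) ⟨∅, by simp⟩
  rw [Finset.mem_filter, Finset.mem_powerset] at hM
  refine ⟨M, hM.1, hM.2, ?_⟩
  have hsub : s ⊆ (M.biUnion fun φ => Finset.univ.image φ).biUnion
      (fun v => s.filter (fun φ => v ∈ Finset.univ.image φ)) := by
    intro ψ hψ
    by_contra hcon
    have hd : ∀ φ ∈ M, Disjoint (Finset.univ.image φ) (Finset.univ.image ψ) := by
      intro φ hφ
      rw [Finset.disjoint_left]
      intro v hv hv'
      apply hcon
      simp only [Finset.mem_biUnion, Finset.mem_filter]
      exact ⟨v, ⟨φ, hφ, hv⟩, hψ, hv'⟩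
    have hψM : ψ ∉ M := by
      intro h
      have := hd ψ h
      rw [disjoint_self] at this
      simp at this
      exact absurd this Finset.univ_nonempty.ne_empty
    have := hmax (insert ψ M) (by
      rw [Finset.mem_filter, Finset.mem_powerset]
      refine ⟨Finset.insert_subset hψ hM.1, ?_⟩
      intro a ha b hb hab
      rw [Finset.mem_insert] at ha hb
      rcases ha with rfl | ha <;> rcases hb with rfl | hb
      · exact absurd rfl hab
      · exact (hd b hb).symm
      · exact hd a ha
      · exact hM.2 a ha b hb hab)
    rw [Finset.card_insert_of_notMem hψM] at this
    omega
  calc s.card ≤ _ := Finset.card_le_card hsub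
    _ ≤ (M.biUnion fun φ => Finset.univ.image φ).card * k := Finset.card_biUnion_le_card_mul _ _ _ fun v _ => hk v
    _ ≤ (M.card * Fintype.card U) * k := by
      gcongr
      exact Finset.card_biUnion_le_card_mul _ _ _ fun φ _ => Finset.card_image_le

lemma hg_sum_le {Ω ι : Type} [MeasurableSpace Ω] (ν : Measure Ω) [IsFiniteMeasure ν] (M : Finset ι)
    (E : ι → Set Ω) (hE : ∀ i, MeasurableSet (E i)) (Y : Set Ω) (hY : MeasurableSet Y) {C : ℝ}
    (h : ∀ x ∈ Y, ∑ i ∈ M, (E i).indicator (fun _ => (1 : ℝ)) x ≤ C) :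
    ∑ i ∈ M, ν.real (Y ∩ E i) ≤ C * ν.real Y := by
  have e : ∀ i, ν.real (Y ∩ E i) = ∫ x in Y, (E i).indicator (fun _ => (1 : ℝ)) x ∂ν := by
    intro i
    rw [integral_indicator (hE i), Measure.restrict_restrict (hE i), inter_comm]
    simp
  have hIntg : ∀ i, Integrable ((E i).indicator (fun _ => (1 : ℝ))) (ν.restrict Y) :=
    fun i => (integrable_const _).indicator (hE i)
  calc ∑ i ∈ M, ν.real (Y ∩ E i) = ∫ x in Y, ∑ i ∈ M, (E i).indicator (fun _ => (1 : ℝ)) x ∂ν := by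
        rw [integral_finsetSum _ fun i _ => hIntg i]
        exact Finset.sum_congr rfl fun i _ => e i
    _ ≤ ∫ x in Y, C ∂ν := by
        refine setIntegral_mono_on (integrable_finsetSum _ fun i _ => hIntg i) (integrable_const _) hY h
    _ = _ := by simp [mul_comm]

lemma hg_bad (G : Set (U → ℝ)) (hG : MeasurableSet G) (M : Finset (U → V))
    (hinj : ∀ φ ∈ M, Function.Injective φ)
    (hdis : ∀ φ ∈ M, ∀ ψ ∈ M, φ ≠ ψ → Disjoint (Finset.univ.image φ) (Finset.univ.image ψ))
    {Λ η : ℝ} (hΛ : 0 ≤ Λ) (hη : 0 ≤ η)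
    (hGΛ : (Measure.pi (fun _ : U => μ)).real G ≤ Real.exp (-Λ)) :
    (Measure.pi (fun _ : V => μ)).real {x | η * M.card < ∑ φ ∈ M,
      ((fun (x : V → ℝ) (j : U) => x (φ j)) ⁻¹' G).indicator (fun _ => (1 : ℝ)) x} ≤
      2 ^ M.card * Real.exp (-(Λ * η * M.card)) := by
  classical
  set Q := M.powerset.filter (fun M' => η * (M.card : ℝ) ≤ M'.card) with hQ
  have hsub : {x : V → ℝ | η * M.card < ∑ φ ∈ M,
      ((fun (x : V → ℝ) (j : U) => x (φ j)) ⁻¹' G).indicator (fun _ => (1 : ℝ)) x} ⊆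
      ⋃ M' ∈ Q, {x : V → ℝ | ∀ φ ∈ M', (fun j => x (φ j)) ∈ G} := by
    intro x hx
    simp only [mem_ofPred_eq, Set.indicator, mem_preimage] at hx
    rw [← Finset.sum_filter, Finset.sum_const, nsmul_eq_mul, mul_one] at hx
    simp only [mem_iUnion]
    refine ⟨M.filter (fun φ => (fun j => x (φ j)) ∈ G), ?_, ?_⟩
    · rw [hQ, Finset.mem_filter, Finset.mem_powerset]
      exact ⟨Finset.filter_subset _ _, hx.le⟩
    · intro φ hφ
      exact (Finset.mem_filter.mp hφ).2
  calc _ ≤ (Measure.pi (fun _ : V => μ)).real (⋃ M' ∈ Q, {x : V → ℝ | ∀ φ ∈ M', (fun j => x (φ j)) ∈ G}) :=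
        measureReal_mono hsub (measure_ne_top _ _)
    _ ≤ ∑ M' ∈ Q, (Measure.pi (fun _ : V => μ)).real {x : V → ℝ | ∀ φ ∈ M', (fun j => x (φ j)) ∈ G} :=
        measureReal_biUnion_finset_le _ _
    _ ≤ ∑ M' ∈ Q, Real.exp (-(Λ * η * M.card)) := by
        refine Finset.sum_le_sum fun M' hM' => ?_
        rw [hQ, Finset.mem_filter, Finset.mem_powerset] at hM'
        rw [measureReal_def, hg_disj μ G hG M' (fun φ h => hinj φ (hM'.1 h))
          (fun a ha b hb => hdis a (hM'.1 ha) b (hM'.1 hb)), ENNReal.toReal_pow, ← measureReal_def]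
        calc _ ≤ Real.exp (-Λ) ^ M'.card := by gcongr
          _ = Real.exp (-(Λ * M'.card)) := by rw [← Real.exp_nat_mul]; ring_nf
          _ ≤ _ := by
            apply Real.exp_le_exp.mpr
            nlinarith [mul_le_mul_of_nonneg_left hM'.2 hΛ]
    _ ≤ _ := by
        rw [Finset.sum_const, nsmul_eq_mul]
        gcongr
        have : Q.card ≤ 2 ^ M.card := by
          rw [← Finset.card_powerset]; exact Finset.card_le_card (Finset.filter_subset _ _)
        exact_mod_cast this

lemma hg_main [Nonempty U] [Nonempty V] (emb : Finset (U → V))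
    (hinj : ∀ φ ∈ emb, Function.Injective φ)
    (k : ℕ) (hk0 : 0 < k)
    (hk : ∀ v : V, (emb.filter (fun φ => v ∈ Finset.univ.image φ)).card = k)
    (G : Set (U → ℝ)) (hG : MeasurableSet G) (X : Set (V → ℝ)) (hX : MeasurableSet X)
    {ε b Λ : ℝ} (hε : 0 < ε) (hb : 0 ≤ b) (hΛ : 0 ≤ Λ)
    (hGΛ : (Measure.pi (fun _ : U => μ)).real G ≤ Real.exp (-Λ))
    (hΛb : Real.log 2 + (b + 1) * (2 * (Fintype.card U : ℝ) ^ 2 / ε) ≤ Λ * (ε / 4))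
    (hXb : Real.exp (-(b * Fintype.card V)) ≤ (Measure.pi (fun _ : V => μ)).real X)
    (hn : Real.exp (-(Fintype.card V : ℝ)) < ε / 4) :
    ∑ φ ∈ emb, (Measure.pi (fun _ : V => μ)).real
      (X ∩ (fun (x : V → ℝ) (j : U) => x (φ j)) ⁻¹' G) ≤
      ε * emb.card * (Measure.pi (fun _ : V => μ)).real X := by
  by_contra hcon
  push Not at hcon
  set ν := Measure.pi (fun _ : V => μ) with hν
  set E : (U → V) → Set (V → ℝ) := fun φ => (fun (x : V → ℝ) (j : U) => x (φ j)) ⁻¹' G with hE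
  have hEm : ∀ φ, MeasurableSet (E φ) := fun φ =>
    (measurable_pi_lambda _ fun j => measurable_pi_apply _) hG
  have hX0 : 0 < ν.real X := (Real.exp_pos _).trans_le hXb
  set S := emb.filter (fun φ => ε / 2 * ν.real X < ν.real (X ∩ E φ)) with hS
  have hembR : (0 : ℝ) ≤ emb.card := by positivity
  have hScard : ε / 2 * emb.card < S.card := by
    have h1 : ∑ φ ∈ emb, ν.real (X ∩ E φ) ≤
        ∑ φ ∈ emb, (ε / 2 * ν.real X + if φ ∈ S then ν.real X else 0) := by
      refine Finset.sum_le_sum fun φ hφ => ?_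
      split_ifs with h
      · have := measureReal_mono (μ := ν) (inter_subset_left : X ∩ E φ ⊆ X)
        have : 0 ≤ ε / 2 * ν.real X := by positivity
        linarith
      · rw [hS, Finset.mem_filter, not_and, not_lt] at h
        linarith [h hφ]
    rw [Finset.sum_add_distrib, ← Finset.sum_filter, Finset.sum_const, Finset.sum_const,
      Finset.filter_mem_eq_inter, Finset.inter_eq_right.mpr (Finset.filter_subset _ _),
      nsmul_eq_mul, nsmul_eq_mul] at h1
    have h2 : (ε / 2 * emb.card) * ν.real X < S.card * ν.real X := by
      have := hcon.trans_le h1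
      linarith
    exact lt_of_mul_lt_mul_right h2 hX0.le
  obtain ⟨M, hMS, hdis, hMc⟩ := hg_maxmatch S k (fun v => (Finset.card_le_card
    (Finset.filter_subset_filter _ (Finset.filter_subset _ _))).trans (hk v).le)
  have hMemb : M ⊆ emb := hMS.trans (Finset.filter_subset _ _)
  have hkR : (0 : ℝ) < k := by exact_mod_cast hk0
  have hr : (0 : ℝ) < Fintype.card U := by exact_mod_cast Fintype.card_pos
  have hV : (0 : ℝ) < Fintype.card V := by exact_mod_cast Fintype.card_pos
  have hc := hk_count emb hinj k hk
  have hMc' : (S.card : ℝ) ≤ M.card * Fintype.card U * k := by exact_mod_cast hMc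
  have hMn : Fintype.card V ≤ (2 * (Fintype.card U : ℝ) ^ 2 / ε) * M.card := by
    have h1 : ε / 2 * emb.card < M.card * Fintype.card U * k := hScard.trans_le hMc'
    have h2 : ε / 2 * (k * Fintype.card V) ≤ M.card * (Fintype.card U : ℝ) ^ 2 * k := by
      rw [← hc]
      nlinarith
    have h3 : k * (ε / 2 * Fintype.card V) ≤ k * (M.card * (Fintype.card U : ℝ) ^ 2) := by linarith
    have h4 := le_of_mul_le_mul_left h3 hkR
    rw [div_mul_eq_mul_div, le_div_iff₀ hε]
    linarith
  have hM0 : (0 : ℝ) < M.card := by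
    by_contra h
    have : (M.card : ℝ) = 0 := le_antisymm (not_lt.mp h) (by positivity)
    rw [this] at hMn; linarith
  have hbad := hg_bad μ G hG M (fun φ h => hinj φ (hMemb h)) hdis hΛ (η := ε / 4) (by positivity) hGΛ
  set bad : Set (V → ℝ) := {x | ε / 4 * M.card < ∑ φ ∈ M,
      (E φ).indicator (fun _ => (1 : ℝ)) x} with hbd
  have hbadm : MeasurableSet bad := by
    refine measurableSet_lt measurable_const ?_
    exact Finset.measurable_sum _ fun φ _ => measurable_const.indicator (hEm φ)
  have hbad' : ν.real bad ≤ 2 ^ M.card * Real.exp (-(Λ * (ε / 4) * M.card)) := hbad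
  have h1 := hg_sum_le ν M E hEm (X \ bad) (hX.diff hbadm) (C := ε / 4 * M.card) (by
    intro x hx
    have := hx.2
    simp only [hbd, mem_ofPred_eq, not_lt] at this
    exact this)
  have h2 : ∑ φ ∈ M, ν.real (X ∩ E φ) ≤ ∑ φ ∈ M, (ν.real ((X \ bad) ∩ E φ) + ν.real bad) := by
    refine Finset.sum_le_sum fun φ _ => ?_
    refine (measureReal_mono ?_).trans (measureReal_union_le _ _)
    intro x hx
    by_cases h : x ∈ bad
    · exact Or.inr h
    · exact Or.inl ⟨⟨hx.1, h⟩, hx.2⟩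
  have h3 : ∑ φ ∈ M, ε / 2 * ν.real X ≤ ∑ φ ∈ M, ν.real (X ∩ E φ) :=
    Finset.sum_le_sum fun φ h => (Finset.mem_filter.mp (hMS h)).2.le
  rw [Finset.sum_add_distrib, Finset.sum_const, nsmul_eq_mul] at h2
  rw [Finset.sum_const, nsmul_eq_mul] at h3
  have h4 : ε / 4 * M.card * ν.real (X \ bad) ≤ ε / 4 * M.card * ν.real X :=
    mul_le_mul_of_nonneg_left (measureReal_mono sdiff_subset) (by positivity)
  have h5 : M.card * (ε / 4 * ν.real X) ≤ M.card * ν.real bad := by linarith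
  have h6 := le_of_mul_le_mul_left h5 hM0
  have h7 : (2 : ℝ) ^ M.card * Real.exp (-(Λ * (ε / 4) * M.card)) ≤
      Real.exp (-((b + 1) * Fintype.card V)) := by
    have : (2 : ℝ) ^ M.card = Real.exp (M.card * Real.log 2) := by
      rw [Real.exp_nat_mul, Real.exp_log (by norm_num)]
    rw [this, ← Real.exp_add]
    apply Real.exp_le_exp.mpr
    have i1 := mul_le_mul_of_nonneg_right hΛb hM0.le
    have i2 := mul_le_mul_of_nonneg_left hMn (by linarith : 0 ≤ b + 1)
    linarith
  have h8 : Real.exp (-((b + 1) * Fintype.card V)) =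
      Real.exp (-(Fintype.card V : ℝ)) * Real.exp (-(b * Fintype.card V)) := by
    rw [← Real.exp_add]; ring_nf
  have h9 : Real.exp (-(Fintype.card V : ℝ)) * Real.exp (-(b * Fintype.card V)) < ε / 4 * ν.real X := by
    calc _ < ε / 4 * Real.exp (-(b * Fintype.card V)) := by gcongr
      _ ≤ _ := by gcongr
  linarith

end Matching

/-! ### Section H: approximation by finitely coded sets -/
section Approx
variable {U : Type} [Fintype U] [DecidableEq U]

lemma hh_meas {K : Type} [Fintype K] (q : ℝ → K) (hq : ∀ a, MeasurableSet (q ⁻¹' {a}))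
    (F : Set (U → K)) : MeasurableSet {x : U → ℝ | (fun j => q (x j)) ∈ F} := by
  have : {x : U → ℝ | (fun j => q (x j)) ∈ F} =
      ⋃ a ∈ F, Set.univ.pi (fun j => q ⁻¹' {a j}) := by
    ext x
    simp only [mem_ofPred_eq, mem_iUnion, Set.mem_pi, mem_univ, true_imp_iff, mem_preimage,
      mem_singleton_iff, exists_prop]
    constructor
    · intro h; exact ⟨_, h, fun _ => rfl⟩
    · rintro ⟨a, ha, h⟩
      have : (fun j => q (x j)) = a := funext h
      rwa [this]
  rw [this]
  refine MeasurableSet.biUnion (Set.toFinite F).countable fun a _ => ?_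
  exact MeasurableSet.univ_pi fun j => hq _

lemma hh_approx (ν : Measure (U → ℝ)) [IsFiniteMeasure ν] (F : Set (U → ℝ)) (hF : MeasurableSet F)
    {θ : ℝ} (hθ : 0 < θ) :
    ∃ (K : Type) (_ : Fintype K) (q : ℝ → K) (_ : ∀ a, MeasurableSet (q ⁻¹' {a}))
      (Q : Set (U → K)), ν.real (symmDiff F {x : U → ℝ | (fun j => q (x j)) ∈ Q}) ≤ θ := by
  classical
  set 𝒜 : Set (Set (U → ℝ)) := {s | ∃ (K : Type) (_ : Fintype K) (q : ℝ → K)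
    (_ : ∀ a, MeasurableSet (q ⁻¹' {a})) (Q : Set (U → K)),
    s = {x : U → ℝ | (fun j => q (x j)) ∈ Q}} with h𝒜
  have halg : IsSetAlgebra 𝒜 := by
    refine ⟨?_, ?_, ?_⟩
    · refine ⟨Unit, inferInstance, fun _ => (), fun a => ?_, ∅, by ext; simp⟩
      simp
    · rintro s ⟨K, hK, q, hq, Q, rfl⟩
      exact ⟨K, hK, q, hq, Qᶜ, by ext; simp⟩
    · rintro s t ⟨K, hK, q, hq, Q, rfl⟩ ⟨K', hK', q', hq', Q', rfl⟩
      refine ⟨K × K', inferInstance, fun x => (q x, q' x), ?_,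
        {a | (fun j => (a j).1) ∈ Q ∨ (fun j => (a j).2) ∈ Q'}, by ext; simp⟩
      rintro ⟨a, a'⟩
      have : (fun x => (q x, q' x)) ⁻¹' {(a, a')} = q ⁻¹' {a} ∩ q' ⁻¹' {a'} := by
        ext x; simp
      rw [this]
      exact (hq a).inter (hq' a')
  have hgen : (inferInstance : MeasurableSpace (U → ℝ)) = MeasurableSpace.generateFrom 𝒜 := by
    apply le_antisymm
    · change MeasurableSpace.pi ≤ _
      rw [← generateFrom_pi]
      apply MeasurableSpace.generateFrom_mono
      rintro _ ⟨s, hs, rfl⟩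
      refine ⟨U → Prop, inferInstance, fun x j => x ∈ s j, ?_, {a | ∀ j, a j j}, by ext; simp⟩
      intro a
      have : (fun (x : ℝ) (j : U) => x ∈ s j) ⁻¹' {a} = ⋂ j, {x | (x ∈ s j) = a j} := by
        ext x; simp [funext_iff]
      rw [this]
      refine MeasurableSet.iInter fun j => ?_
      have hsj : MeasurableSet (s j) := hs j (mem_univ _)
      by_cases h : a j
      · simpa [h] using hsj
      · have e : {x | (x ∈ s j) = a j} = (s j)ᶜ := by ext x; simp [h]
        rw [e]; exact hsj.compl
    · apply MeasurableSpace.generateFrom_le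
      rintro s ⟨K, hK, q, hq, Q, rfl⟩
      exact hh_meas q hq Q
  obtain ⟨t, ⟨K, hK, q, hq, Q, rfl⟩, ht⟩ :=
    (Measure.MeasureDense.of_generateFrom_isSetAlgebra_finite ν halg hgen).approx F hF
      (measure_ne_top _ _) θ hθ
  refine ⟨K, hK, q, hq, Q, ?_⟩
  rw [measureReal_def]
  exact ENNReal.toReal_le_of_le_ofReal hθ.le ht.le

end Approx

/-! ### Section I: compactness of boxes -/
section Compactness

/-- ultrafilter limits of restricted measures are measures -/
lemma hi_ultra {Ω : Type} [MeasurableSpace Ω] (ν : Measure Ω) [IsFiniteMeasure ν]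
    (b : ℕ → Set Ω) (f : Ultrafilter ℕ) :
    ∃ lam : Measure Ω, lam ≤ ν ∧ ∀ E, MeasurableSet E →
      Tendsto (fun m => ν (b m ∩ E)) f (nhds (lam E)) := by
  have hex : ∀ E : Set Ω, ∃ x : ENNReal, Tendsto (fun m => ν (b m ∩ E)) f (nhds x) := by
    intro E
    obtain ⟨x, -, hx⟩ := (isCompact_univ (X := ENNReal)).ultrafilter_le_nhds
      (f.map (fun m => ν (b m ∩ E))) (by simp)
    exact ⟨x, hx⟩
  choose L hL using hex
  have hLle : ∀ E, L E ≤ ν E := fun E =>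
    le_of_tendsto' (hL E) fun m => measure_mono inter_subset_right
  have h0 : L ∅ = 0 := le_antisymm (by simpa using hLle ∅) bot_le
  have hU : ∀ ⦃E : ℕ → Set Ω⦄ (h : ∀ i, MeasurableSet (E i)),
        Pairwise (Function.onFun Disjoint E) → L (⋃ i, E i) = ∑' i, L (E i) := by
    intro E hE hd
    have hm : ∀ m, ν (b m ∩ ⋃ i, E i) = ∑' i, ν (b m ∩ E i) := by
      intro m
      have h := measure_iUnion (μ := ν.restrict (b m)) hd hE
      rw [Measure.restrict_apply (MeasurableSet.iUnion hE)] at h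
      rw [inter_comm, h]
      exact tsum_congr fun i => by rw [Measure.restrict_apply (hE i), inter_comm]
    have hfin : ∀ n, Tendsto (fun m => ∑ i ∈ Finset.range n, ν (b m ∩ E i)) f
        (nhds (∑ i ∈ Finset.range n, L (E i))) := fun n =>
      tendsto_finsetSum _ fun i _ => hL (E i)
    apply le_antisymm
    · have hbd : ∀ n, L (⋃ i, E i) ≤ ∑' i, L (E i) + ∑' i, ν (E (i + n)) := by
        intro n
        have h2 : L (⋃ i, E i) ≤ ∑ i ∈ Finset.range n, L (E i) + ∑' i, ν (E (i + n)) := by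
          refine le_of_tendsto_of_tendsto' (hL _) ((hfin n).add_const _) fun m => ?_
          rw [hm, ← ENNReal.summable.sum_add_tsum_nat_add' (k := n)]
          gcongr
          exact inter_subset_right
        exact h2.trans (by gcongr; exact ENNReal.sum_le_tsum _)
      have hne : ∑' i, ν (E i) ≠ ⊤ := by
        rw [← measure_iUnion hd hE]; exact measure_ne_top _ _
      have ht := (ENNReal.tendsto_sum_nat_add (fun i => ν (E i)) hne).const_add (∑' i, L (E i))
      rw [add_zero] at ht
      exact ge_of_tendsto' ht hbd
    · refine ENNReal.tsum_le_of_sum_range_le fun n => ?_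
      refine le_of_tendsto_of_tendsto' (hfin n) (hL _) fun m => ?_
      rw [hm]
      exact ENNReal.sum_le_tsum _
  refine ⟨Measure.ofMeasurable (fun E _ => L E) h0 hU, ?_, ?_⟩
  · refine Measure.le_iff.mpr fun E hE => ?_
    rw [Measure.ofMeasurable_apply E hE]
    exact hLle E
  · intro E hE
    rw [Measure.ofMeasurable_apply E hE]
    exact hL E

variable {U : Type} [Fintype U] [DecidableEq U]

lemma hi_pi_mono (μ μ' : U → Measure ℝ) [∀ j, SigmaFinite (μ j)] [∀ j, SigmaFinite (μ' j)]
    (h : ∀ j, μ j ≤ μ' j) : Measure.pi μ ≤ Measure.pi μ' := by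
  have h1 : (Measure.pi μ).toOuterMeasure ≤ OuterMeasure.pi (fun j => (μ' j).toOuterMeasure) := by
    rw [OuterMeasure.le_pi]
    intro s hs
    change Measure.pi μ (univ.pi s) ≤ ∏ j, μ' j (s j)
    rw [Measure.pi_pi]
    exact Finset.prod_le_prod' fun j _ => h j _
  refine Measure.le_iff.mpr fun E hE => ?_
  rw [Measure.pi, toMeasure_apply _ _ hE]
  rw [Measure.pi, toMeasure_apply _ _ hE]
  have := h1 E
  change Measure.pi μ E ≤ _ at this
  rwa [Measure.pi, toMeasure_apply _ _ hE] at this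

lemma hi_ac (μ : Measure ℝ) [IsProbabilityMeasure μ] (lam : U → Measure ℝ) (hlam : ∀ j, lam j ≤ μ) :
    ∃ B : U → Set ℝ, (∀ j, MeasurableSet (B j)) ∧ (∀ j, lam j univ ≤ μ (B j)) ∧
      ∀ E : Set (U → ℝ), MeasurableSet E → Measure.pi lam E = 0 →
        Measure.pi (fun _ => μ) (univ.pi B ∩ E) = 0 := by
  have hfin : ∀ j, IsFiniteMeasure (lam j) := fun j => isFiniteMeasure_of_le μ (hlam j)
  have hac : ∀ j, lam j ≪ μ := fun j => Measure.absolutelyContinuous_of_le (hlam j)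
  set f : U → ℝ → ENNReal := fun j => (lam j).rnDeriv μ with hf
  have hfm : ∀ j, Measurable (f j) := fun j => Measure.measurable_rnDeriv _ _
  have hwd : ∀ j, μ.withDensity (f j) = lam j := fun j => Measure.withDensity_rnDeriv_eq _ _ (hac j)
  refine ⟨fun j => {x | f j x ≠ 0}, fun j => (hfm j (measurableSet_singleton 0)).compl, ?_, ?_⟩
  · intro j
    have hz : lam j {x | f j x ≠ 0}ᶜ = 0 := by
      rw [← hwd j, withDensity_apply_eq_zero (hfm j)]
      simp
    have hBm : MeasurableSet {x | f j x ≠ 0} := (hfm j (measurableSet_singleton 0)).compl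
    rw [← measure_add_measure_compl hBm, hz, add_zero]
    exact hlam j _
  · intro E hE hz
    set Bn : ℕ → U → Set ℝ := fun n j => {x | ((n : ENNReal) + 1)⁻¹ ≤ f j x} with hBn
    have hBnm : ∀ n j, MeasurableSet (Bn n j) := fun n j => measurableSet_le measurable_const (hfm j)
    have hsub : (univ.pi fun j => {x | f j x ≠ 0}) ∩ E ⊆ ⋃ n, (univ.pi (Bn n) ∩ E) := by
      intro x hx
      have h1 : ∀ j, ∃ n : ℕ, ((n : ENNReal) + 1)⁻¹ ≤ f j (x j) := by
        intro j
        have : f j (x j) ≠ 0 := hx.1 j (mem_univ _)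
        obtain ⟨n, hn⟩ := ENNReal.exists_inv_nat_lt this
        refine ⟨n, le_trans ?_ hn.le⟩
        exact ENNReal.inv_le_inv.mpr le_self_add
      choose n hn using h1
      refine mem_iUnion.mpr ⟨Finset.univ.sup n, fun j _ => ?_, hx.2⟩
      refine le_trans (ENNReal.inv_le_inv.mpr ?_) (hn j)
      gcongr
      exact Finset.le_sup (Finset.mem_univ j)
    refine measure_mono_null hsub (measure_iUnion_null fun n => ?_)
    have hle : ∀ j, μ.restrict (Bn n j) ≤ ((n : NNReal) + 1) • lam j := by
      intro j
      refine Measure.le_iff.mpr fun A hA => ?_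
      have h2 := mul_meas_ge_le_lintegral (μ := μ.restrict A) (hfm j) ((n : ENNReal) + 1)⁻¹
      rw [← withDensity_apply _ hA, hwd, Measure.restrict_apply (hBnm n j)] at h2
      rw [Measure.restrict_apply hA, Measure.smul_apply, inter_comm]
      change μ (Bn n j ∩ A) ≤ (((n : NNReal) + 1 : NNReal) : ENNReal) * lam j A
      push_cast
      rwa [ENNReal.inv_mul_le_iff (by simp) (by finiteness)] at h2
    have hpi : Measure.pi (fun j => ((n : NNReal) + 1) • lam j) =
        (((n : NNReal) + 1) ^ (Fintype.card U)) • Measure.pi lam := by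
      refine Measure.pi_eq fun s hs => ?_
      simp only [Measure.smul_apply, Measure.pi_pi, ENNReal.smul_def, smul_eq_mul,
        Finset.prod_mul_distrib, Finset.prod_const, Finset.card_univ]
      push_cast
      rfl
    have h3 := hi_pi_mono _ _ hle E
    rw [hpi, Measure.smul_apply, hz, smul_zero, ← Measure.restrict_pi_pi,
      Measure.restrict_apply hE, inter_comm] at h3
    exact le_antisymm h3 bot_le

lemma hi_compact (μ : Measure ℝ) [IsProbabilityMeasure μ] (Q : Set (U → ℝ)) (hQ : MeasurableSet Q)
    (C : ENNReal) (h : ∀ A : U → Set ℝ, (∀ j, MeasurableSet (A j)) →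
      Measure.pi (fun _ => μ) (univ.pi A \ Q) = 0 → Measure.pi (fun _ => μ) (univ.pi A) < C) :
    ∃ ε : ENNReal, 0 < ε ∧ ε ≤ 1 ∧ ∀ A : U → Set ℝ, (∀ j, MeasurableSet (A j)) →
      Measure.pi (fun _ => μ) (univ.pi A \ Q) ≤ ε → Measure.pi (fun _ => μ) (univ.pi A) < C := by
  by_contra hcon
  push Not at hcon
  have hseq : ∀ m : ℕ, ∃ A : U → Set ℝ, (∀ j, MeasurableSet (A j)) ∧
      Measure.pi (fun _ => μ) (univ.pi A \ Q) ≤ ((m : ENNReal) + 1)⁻¹ ∧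
      C ≤ Measure.pi (fun _ => μ) (univ.pi A) := by
    intro m
    obtain ⟨A, h1, h2, h3⟩ := hcon ((m : ENNReal) + 1)⁻¹ (by simp) (by simp)
    exact ⟨A, h1, h2, h3⟩
  choose A hAm hA1 hA2 using hseq
  set F : Ultrafilter ℕ := hyperfilter ℕ with hF
  have h1 := fun j => hi_ultra μ (fun m => A m j) F
  choose lam hlam hlt using h1
  obtain ⟨L, hL, hLt⟩ := hi_ultra (Measure.pi (fun _ : U => μ)) (fun m => univ.pi (A m)) F
  have hfin : ∀ j, IsFiniteMeasure (lam j) := fun j => isFiniteMeasure_of_le μ (hlam j)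
  have hLpi : Measure.pi lam = L := by
    refine Measure.pi_eq fun s hs => ?_
    have e := hLt (univ.pi s) (MeasurableSet.univ_pi hs)
    refine tendsto_nhds_unique e ?_
    have e2 : ∀ m, Measure.pi (fun _ : U => μ) (univ.pi (A m) ∩ univ.pi s) =
        ∏ j, μ (A m j ∩ s j) := by
      intro m
      rw [← Set.pi_inter_distrib, Measure.pi_pi]
    simp only [e2]
    exact ENNReal.tendsto_finsetProd_of_ne_top _ (fun j _ => hlt j (s j) (hs j))
      (fun j _ => measure_ne_top _ _)
  obtain ⟨B, hBm, hB1, hB2⟩ := hi_ac μ lam hlam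
  have hLQ : L Qᶜ = 0 := by
    refine tendsto_nhds_unique (hLt Qᶜ hQ.compl) ?_
    have : Tendsto (fun m : ℕ => ((m : ENNReal) + 1)⁻¹) F (nhds 0) := by
      have h0 : Tendsto (fun m : ℕ => ((m : ENNReal) + 1)⁻¹) atTop (nhds 0) := by
        have := (tendsto_add_atTop_iff_nat 1).mpr ENNReal.tendsto_inv_nat_nhds_zero
        simpa using this
      exact h0.mono_left Nat.hyperfilter_le_atTop
    exact tendsto_of_tendsto_of_tendsto_of_le_of_le tendsto_const_nhds this (fun _ => bot_le)
      (fun m => hA1 m)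
  have hB3 := h B hBm (by
    rw [← hLpi] at hLQ
    exact hB2 Qᶜ hQ.compl hLQ)
  have hCL : C ≤ L univ := by
    refine ge_of_tendsto' (hLt univ MeasurableSet.univ) fun m => ?_
    rw [inter_univ]; exact hA2 m
  have hLB : L univ ≤ Measure.pi (fun _ => μ) (univ.pi B) := by
    rw [← hLpi, ← pi_univ univ, Measure.pi_pi, Measure.pi_pi]
    exact Finset.prod_le_prod' fun j _ => hB1 j
  exact absurd hB3 (not_lt.mpr (hCL.trans hLB))

end Compactness

/-! ### Section J: from decorations to codes -/
section Codes
variable {U V K : Type} [Fintype U] [DecidableEq U] [Fintype V] [DecidableEq V]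
  [Fintype K] [DecidableEq K] (μ : Measure ℝ) [IsProbabilityMeasure μ]

/-- Splitting a set according to the code. -/
lemma hj_split (q : ℝ → K) (hq : ∀ a, MeasurableSet (q ⁻¹' {a}))
    (ν : Measure (V → ℝ)) [IsFiniteMeasure ν] (X : Set (V → ℝ)) (hX : MeasurableSet X)
    (F : Finset (V → K)) :
    ν.real (X ∩ {x | (fun v => q (x v)) ∈ F}) =
      ∑ y ∈ F, ν.real (X ∩ {x | (fun v => q (x v)) = y}) := by
  have e : X ∩ {x : V → ℝ | (fun v => q (x v)) ∈ F} =
      ⋃ y ∈ F, X ∩ {x | (fun v => q (x v)) = y} := by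
    ext x
    simp only [mem_inter_iff, mem_ofPred_eq, mem_iUnion, exists_prop]
    constructor
    · rintro ⟨h1, h2⟩; exact ⟨_, h2, h1, rfl⟩
    · rintro ⟨y, hy, h1, h2⟩; exact ⟨h1, h2 ▸ hy⟩
  rw [e]
  refine measureReal_biUnion_finset ?_ ?_
  · intro y _ y' _ hne
    rw [Function.onFun, Set.disjoint_left]
    rintro x ⟨-, h⟩ ⟨-, h'⟩
    exact hne (h.symm.trans h')
  · intro y _
    exact hX.inter (hh_meas q hq {y})

lemma hj_code (q : ℝ → K) (hq : ∀ a, MeasurableSet (q ⁻¹' {a})) (y : V → K) :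
    (Measure.pi (fun _ : V => μ)).real {x | (fun v => q (x v)) = y} = ∏ v, μ.real (q ⁻¹' {y v}) := by
  have e : {x : V → ℝ | (fun v => q (x v)) = y} = univ.pi (fun v => q ⁻¹' {y v}) := by
    ext x
    simp [funext_iff, Set.mem_pi]
  rw [e, measureReal_def, Measure.pi_pi, ENNReal.toReal_prod]
  rfl

lemma hj_preim (q : ℝ → K) (hq : ∀ a, MeasurableSet (q ⁻¹' {a})) (A : Finset K) :
    MeasurableSet (q ⁻¹' (A : Set K)) ∧ μ.real (q ⁻¹' (A : Set K)) = ∑ a ∈ A, μ.real (q ⁻¹' {a}) := by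
  have e : q ⁻¹' (A : Set K) = ⋃ a ∈ A, q ⁻¹' {a} := by
    ext x; simp
  rw [e]
  refine ⟨Finset.measurableSet_biUnion _ fun a _ => hq a, measureReal_biUnion_finset ?_ fun a _ => hq a⟩
  intro a _ a' _ hne
  rw [Function.onFun, Set.disjoint_left]
  rintro x h h'
  exact hne ((mem_singleton_iff.mp h).symm.trans (mem_singleton_iff.mp h'))

lemma hj_sumw (q : ℝ → K) (hq : ∀ a, MeasurableSet (q ⁻¹' {a})) : ∑ a, μ.real (q ⁻¹' {a}) = 1 := by
  rw [← (hj_preim μ q hq Finset.univ).2]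
  simp

lemma hj_box (q : ℝ → K) (hq : ∀ a, MeasurableSet (q ⁻¹' {a})) (Q : Set (U → ℝ))
    (hQ : MeasurableSet Q) (F : Finset (U → K)) {ε θ c : ℝ}
    (hcomp : ∀ A : U → Set ℝ, (∀ j, MeasurableSet (A j)) →
      (Measure.pi (fun _ : U => μ)).real (univ.pi A \ Q) ≤ ε + θ →
        (Measure.pi (fun _ : U => μ)).real (univ.pi A) ≤ c)
    (happ : (Measure.pi (fun _ : U => μ)).real (Qᶜ \ {x | (fun j => q (x j)) ∈ F}) ≤ θ)
    (A : U → Finset K)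
    (hA : ∑ a ∈ F.filter (fun a => ∀ j, a j ∈ A j), ∏ j, μ.real (q ⁻¹' {a j}) ≤ ε) :
    ∏ j, ∑ a ∈ A j, μ.real (q ⁻¹' {a}) ≤ c := by
  have h := hcomp (fun j => q ⁻¹' (A j : Set K)) (fun j => (hj_preim μ q hq (A j)).1) (by
    have hsub : univ.pi (fun j => q ⁻¹' (A j : Set K)) \ Q ⊆
        {x : U → ℝ | (fun j => q (x j)) ∈ F.filter (fun a => ∀ j, a j ∈ A j)} ∪
          (Qᶜ \ {x | (fun j => q (x j)) ∈ F}) := by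
      rintro x ⟨h1, h2⟩
      by_cases hx : (fun j => q (x j)) ∈ F
      · left
        simp only [Finset.mem_filter, mem_ofPred_eq]
        refine ⟨hx, fun j => ?_⟩
        have := h1 j (mem_univ _)
        simpa using this
      · right; exact ⟨h2, hx⟩
    refine (measureReal_mono hsub (measure_ne_top _ _)).trans ((measureReal_union_le _ _).trans ?_)
    have e := hj_split q hq (Measure.pi (fun _ : U => μ)) univ MeasurableSet.univ
      (F.filter (fun a => ∀ j, a j ∈ A j))
    simp only [univ_inter, hj_code μ q hq] at e
    rw [e]
    linarith)
  rw [measureReal_def, Measure.pi_pi, ENNReal.toReal_prod] at h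
  refine le_trans (le_of_eq ?_) h
  exact Finset.prod_congr rfl fun j _ => ((hj_preim μ q hq (A j)).2).symm

lemma hj_step [Nonempty U] [Nonempty V] [Nonempty K] (emb : Finset (U → V))
    (hinj : ∀ φ ∈ emb, Function.Injective φ)
    (k : ℕ) (hk0 : 0 < k)
    (hk : ∀ v : V, (emb.filter (fun φ => v ∈ Finset.univ.image φ)).card = k)
    (hemb : 0 < emb.card)
    (q : ℝ → K) (hq : ∀ a, MeasurableSet (q ⁻¹' {a})) (F : Finset (U → K))
    (G : Set (U → ℝ)) (hG : MeasurableSet G) (X : Set (V → ℝ)) (hX : MeasurableSet X)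
    (hXG : ∀ x ∈ X, ∀ φ ∈ emb, (fun j => q (x (φ j))) ∈ F → (fun j => x (φ j)) ∈ G)
    {ε0 ε' ε2 σ τ l t σ' δ κ b3 c b Λ : ℝ}
    (hε0 : 0 < ε0) (hb : 0 ≤ b) (hΛ : 0 ≤ Λ)
    (hGΛ : (Measure.pi (fun _ : U => μ)).real G ≤ Real.exp (-Λ))
    (hΛb : Real.log 2 + (b + 1) * (2 * (Fintype.card U : ℝ) ^ 2 / ε0) ≤ Λ * (ε0 / 4))
    (hXb : Real.exp (-(b * Fintype.card V)) ≤ (Measure.pi (fun _ : V => μ)).real X)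
    (hn : Real.exp (-(Fintype.card V : ℝ)) < ε0 / 4)
    (hl : 0 ≤ l) (ht : 0 < t) (ht1 : t ≤ 1) (hσ : 0 < σ) (hσ' : 0 < σ') (hδ : 0 < δ) (hδ1 : δ < 1)
    (hτ : (k : ℝ) * (l * (t * Fintype.card V)) + Fintype.card K * (σ' * k * Fintype.card V +
        (Fintype.card U * (((emb ×ˢ emb).filter (fun p =>
          1 < ((Finset.univ.image p.1) ∩ (Finset.univ.image p.2)).card)).card : ℝ)) /
          (σ' * k * t ^ (2 * (Fintype.card U - 1)))) ≤ τ * emb.card)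
    (hε' : 0 < ε')
    (hε : ε0 + (Fintype.card K : ℝ) ^ (Fintype.card U) * (Fintype.card U * σ + τ / σ) ≤ ε')
    (hε2 : 0 < ε2) (hκ : 2 * ε' ≤ κ * (ε2 * δ ^ (Fintype.card U))) (hb3 : 0 ≤ b3)
    (hbox : ∀ A : U → Finset K, ∑ a ∈ F.filter (fun a => ∀ j, a j ∈ A j),
      ∏ j, μ.real (q ⁻¹' {a j}) ≤ ε2 → ∏ j, ∑ a ∈ A j, μ.real (q ⁻¹' {a}) ≤ c)
    (hc : c + 2 ^ (Fintype.card U) * δ ≤ Real.exp (-(b3 * Fintype.card U))) :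
    ∃ T : ℕ, l * T ≤ Fintype.card V * Fintype.card K ∧
      (Measure.pi (fun _ : V => μ)).real X * Real.exp (δ * Real.log δ * Fintype.card V) ≤
        2 * (Fintype.card K : ℝ) ^ T *
        Real.exp ((-b3 + κ * (b3 + Real.log 2)) * Fintype.card V) := by
  set ν := Measure.pi (fun _ : V => μ) with hν
  have hX0 : 0 < ν.real X := (Real.exp_pos _).trans_le hXb
  set p : (V → K) → ℝ := fun y => ν.real (X ∩ {x | (fun v => q (x v)) = y}) / ν.real X with hp
  have hp0 : ∀ y, 0 ≤ p y := fun y => by positivity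
  have hp1 : ∑ y, p y = 1 := by
    rw [hp, ← Finset.sum_div, ← hj_split q hq ν X hX Finset.univ]
    simp only [Finset.mem_univ, ofPred_true, inter_univ]
    exact div_self hX0.ne'
  refine he_main emb hinj k hk0 hk hemb hp0 hp1 (fun a => μ.real (q ⁻¹' {a})) (fun a => by positivity)
    (hj_sumw μ q hq) hX0.le ?_ F (ε0 := ε0) ?_ hl ht ht1 hσ hσ' hδ hδ1 hτ hε' hε hε2 hκ hb3 hbox hc
  · intro y
    rw [hp]
    simp only
    rw [mul_div_cancel₀ _ hX0.ne', ← hj_code μ q hq]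
    exact measureReal_mono inter_subset_right
  · have hmain := hg_main μ emb hinj k hk0 hk G hG X hX hε0 hb hΛ hGΛ hΛb hXb hn
    have h1 : ∀ φ ∈ emb, hcEx p (fun y => if (fun j => y (φ j)) ∈ F then 1 else 0) ≤
        ν.real (X ∩ (fun (x : V → ℝ) (j : U) => x (φ j)) ⁻¹' G) / ν.real X := by
      intro φ hφ
      have e : hcEx p (fun y => if (fun j => y (φ j)) ∈ F then 1 else 0) =
          ν.real (X ∩ {x | (fun v => q (x v)) ∈ Finset.univ.filter
            (fun y : V → K => (fun j => y (φ j)) ∈ F)}) / ν.real X := by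
        rw [hj_split q hq ν X hX, Finset.sum_div, Finset.sum_filter, hcEx]
        refine Finset.sum_congr rfl fun y _ => ?_
        split_ifs <;> simp [hp]
      rw [e]
      refine div_le_div_of_nonneg_right (measureReal_mono ?_ (measure_ne_top _ _)) hX0.le
      rintro x ⟨hx, hx2⟩
      refine ⟨hx, hXG x hx φ hφ ?_⟩
      simpa using hx2
    calc _ ≤ _ := Finset.sum_le_sum h1
      _ ≤ _ := by
        rw [← Finset.sum_div, div_le_iff₀ hX0]
        exact hmain

end Codes

/-- Lebesgue measure on the unit interval. -/
def hlMu : Measure ℝ := volume.restrict (Icc 0 1)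

instance hlMu_prob : IsProbabilityMeasure hlMu := by
  refine ⟨?_⟩
  simp [hlMu]

lemma hl_vol (ι : Type) [Fintype ι] :
    (volume : Measure (ι → ℝ)).restrict (unitCube ι) = Measure.pi (fun _ : ι => hlMu) := by
  rw [unitCube, volume_pi, Measure.restrict_pi_pi]
  rfl

lemma hl_cube_meas (ι : Type) [Fintype ι] : MeasurableSet (unitCube ι) :=
  MeasurableSet.univ_pi fun _ => measurableSet_Icc

lemma hl_apply {ι : Type} [Fintype ι] (X : Set (ι → ℝ)) :
    Measure.pi (fun _ : ι => hlMu) X = volume (X ∩ unitCube ι) := by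
  rw [← hl_vol, Measure.restrict_apply' (hl_cube_meas ι)]

lemma hl_apply_sub {ι : Type} [Fintype ι] (X : Set (ι → ℝ)) (hX : X ⊆ unitCube ι) :
    Measure.pi (fun _ : ι => hlMu) X = volume X := by
  rw [hl_apply, inter_eq_left.mpr hX]

lemma hl_delta {s c d M : ℝ} (hs : 0 < s) (hM : 0 < M) (hcd : c < d) :
    ∃ δ : ℝ, 0 < δ ∧ δ < 1 ∧ -s ≤ δ * Real.log δ ∧ c + M * δ ≤ d := by
  have h1 : Tendsto (fun x : ℝ => x * Real.log x) (nhdsWithin 0 (Ioi 0)) (nhds 0) := by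
    have := Real.continuous_mul_log.tendsto 0
    simp only [zero_mul] at this
    exact this.mono_left nhdsWithin_le_nhds
  have h2 : Tendsto (fun x : ℝ => c + M * x) (nhdsWithin 0 (Ioi 0)) (nhds c) := by
    have : Continuous (fun x : ℝ => c + M * x) := by fun_prop
    have := this.tendsto 0
    simp only [mul_zero, add_zero] at this
    exact this.mono_left nhdsWithin_le_nhds
  have e1 := h1.eventually (lt_mem_nhds (show -s < 0 by linarith))
  have e2 := h2.eventually (gt_mem_nhds hcd)
  have e3 : ∀ᶠ x in nhdsWithin (0:ℝ) (Ioi 0), 0 < x ∧ x < 1 := by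
    filter_upwards [Ioo_mem_nhdsGT (show (0:ℝ) < 1 by norm_num)] with x hx using hx
  obtain ⟨δ, h⟩ := (e1.and (e2.and e3)).exists
  exact ⟨δ, h.2.2.1, h.2.2.2, h.1.le, h.2.1.le⟩

lemma hl_final {K T : ℕ} {X δ s b3 κ n l b : ℝ} (hK : 0 < K) (hs : 0 < s) (hn0 : 0 ≤ n)
    (hδ : -s ≤ δ * Real.log δ) (hκ : κ * (b3 + Real.log 2) ≤ s) (h2 : Real.log 2 ≤ s * n)
    (hl : 0 < l) (hlK : K * Real.log K ≤ s * l) (hT : l * T ≤ n * K) (hb : b + 4 * s ≤ b3) (hX0 : 0 ≤ X)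
    (h : X * Real.exp (δ * Real.log δ * n) ≤ 2 * (K : ℝ) ^ T *
        Real.exp ((-b3 + κ * (b3 + Real.log 2)) * n)) : X ≤ Real.exp (-(b * n)) := by
  have hKR : (0:ℝ) < K := by exact_mod_cast hK
  have hlogK : 0 ≤ Real.log K := Real.log_natCast_nonneg K
  have hTK : T * Real.log K ≤ s * n := by
    have : l * (T * Real.log K) ≤ l * (s * n) := by
      calc l * (T * Real.log K) = (l * T) * Real.log K := by ring
        _ ≤ (n * K) * Real.log K := by gcongr
        _ = n * (K * Real.log K) := by ring
        _ ≤ n * (s * l) := by gcongr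
        _ = _ := by ring
    exact le_of_mul_le_mul_left this hl
  have e1 : (2:ℝ) * (K : ℝ) ^ T = Real.exp (Real.log 2 + T * Real.log K) := by
    rw [Real.exp_add, Real.exp_log two_pos, mul_comm (T:ℝ), Real.exp_mul, Real.exp_log hKR,
      Real.rpow_natCast]
  rw [e1, ← Real.exp_add] at h
  have h3 : X ≤ Real.exp (Real.log 2 + T * Real.log K + (-b3 + κ * (b3 + Real.log 2)) * n) *
      Real.exp (-(δ * Real.log δ * n)) := by
    rw [Real.exp_neg, ← div_eq_mul_inv, le_div_iff₀ (Real.exp_pos _)]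
    exact h
  rw [← Real.exp_add] at h3
  refine h3.trans (Real.exp_le_exp.mpr ?_)
  have a1 : κ * (b3 + Real.log 2) * n ≤ s * n := by gcongr
  have a2 : -s * n ≤ δ * Real.log δ * n := by gcongr
  have a3 : (b + 4 * s) * n ≤ b3 * n := by gcongr
  nlinarith

lemma hl_heart (S : Ssee) (hS : S.Good) (hHom : S.Homogeneous)
    (P : ∀ n, Set (S.V n → ℝ)) (hP : S.Hereditary P) (N : ℕ) (hN : 1 < Fintype.card (S.V N))
    {b π1 : ℝ} (hb : 0 ≤ b) (hbπ : b < π1)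
    (hbx : ∀ A : S.V N → Set ℝ, (∀ j, MeasurableSet (A j)) →
      Measure.pi (fun _ : S.V N => hlMu) (univ.pi A \ P N) = 0 →
      Measure.pi (fun _ : S.V N => hlMu) (univ.pi A) <
        ENNReal.ofReal (Real.exp (-(π1 * Fintype.card (S.V N))))) :
    ∀ᶠ n in atTop, (Measure.pi (fun _ : S.V n => hlMu)).real (P n) ≤
      Real.exp (-(b * Fintype.card (S.V n))) := by
  classical
  obtain ⟨ε1', hε1p, hε1le, hcomp⟩ := hi_compact hlMu (P N) (hP.1 N).1 _ hbx
  set r := Fintype.card (S.V N) with hr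
  have hrR : (0:ℝ) < r := by exact_mod_cast (by omega : 0 < r)
  have hε1top : ε1' ≠ ⊤ := ne_top_of_le_ne_top ENNReal.one_ne_top hε1le
  set ε1 : ℝ := ε1'.toReal with hε1
  have hε10 : 0 < ε1 := ENNReal.toReal_pos hε1p.ne' hε1top
  set s := (π1 - b) / 8 with hs
  have hs0 : 0 < s := by rw [hs]; linarith
  set b3 := b + 4 * s with hb3
  have hb30 : 0 ≤ b3 := by positivity
  have hb3π : b3 < π1 := by rw [hb3, hs]; linarith
  obtain ⟨δ, hδ0, hδ1, hδs, hδc⟩ := hl_delta (s := s) (c := Real.exp (-(π1 * r)))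
    (d := Real.exp (-(b3 * r))) (M := 2 ^ r) hs0 (by positivity)
    (Real.exp_lt_exp.mpr (by nlinarith))
  have hlog2 : 0 < Real.log 2 := Real.log_pos one_lt_two
  set κ := s / (b3 + Real.log 2) with hκ
  have hκ0 : 0 < κ := by positivity
  have hκs : κ * (b3 + Real.log 2) ≤ s := by
    rw [hκ, div_mul_cancel₀]; positivity
  set ε2 := ε1 / 2 with hε2
  have hε20 : 0 < ε2 := by positivity
  set ε' := κ * (ε2 * δ ^ r) / 2 with hε'
  have hε'0 : 0 < ε' := by positivity
  have hκ2 : 2 * ε' ≤ κ * (ε2 * δ ^ r) := by rw [hε']; linarith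
  set ε0 := ε' / 2 with hε0
  have hε00 : 0 < ε0 := by positivity
  set Λ := (Real.log 2 + (b + 1) * (2 * (r:ℝ) ^ 2 / ε0)) / (ε0 / 4) with hΛ
  have hΛ0 : 0 ≤ Λ := by positivity
  set θ := min (ε1 / 2) (Real.exp (-Λ)) with hθ
  have hθ0 : 0 < θ := lt_min (by positivity) (Real.exp_pos _)
  obtain ⟨K, instK, q, hq, Q, hQ⟩ := hh_approx (Measure.pi (fun _ : S.V N => hlMu)) (P N)ᶜ
    (hP.1 N).1.compl hθ0
  have : Nonempty K := ⟨q 0⟩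
  set F : Finset (S.V N → K) := Q.toFinset with hF
  have hFQ : ∀ a, a ∈ F ↔ a ∈ Q := fun a => by simp [hF]
  set κK := Fintype.card K with hκK
  have hK0 : 0 < κK := Fintype.card_pos
  have hK0R : (0:ℝ) < κK := by exact_mod_cast hK0
  have hlogK : 0 ≤ Real.log κK := Real.log_natCast_nonneg _
  set G : Set (S.V N → ℝ) := {x | (fun j => q (x j)) ∈ F} ∩ P N with hG
  have hGm : MeasurableSet G := (hh_meas q hq (F : Set (S.V N → K))).inter (hP.1 N).1
  have hGΛ : (Measure.pi (fun _ : S.V N => hlMu)).real G ≤ Real.exp (-Λ) := by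
    refine le_trans (measureReal_mono ?_ (measure_ne_top _ _)) (hQ.trans (min_le_right _ _))
    rintro x ⟨h1, h2⟩
    exact Or.inr ⟨(hFQ _).1 h1, fun h => h h2⟩
  have happ : (Measure.pi (fun _ : S.V N => hlMu)).real ((P N)ᶜ \ {x | (fun j => q (x j)) ∈ F}) ≤
      ε1 / 2 := by
    refine le_trans (measureReal_mono ?_ (measure_ne_top _ _)) (hQ.trans (min_le_left _ _))
    rintro x ⟨h1, h2⟩
    exact Or.inl ⟨h1, fun h => h2 ((hFQ _).2 h)⟩
  have hbox := hj_box hlMu q hq (P N) (hP.1 N).1 F (ε := ε2) (θ := ε1 / 2)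
    (c := Real.exp (-(π1 * r))) (by
      intro A hA h
      have : Measure.pi (fun _ : S.V N => hlMu) (univ.pi A \ P N) ≤ ε1' := by
        rw [← ENNReal.toReal_le_toReal (measure_ne_top _ _) hε1top]
        rw [measureReal_def] at h
        linarith
      exact ENNReal.toReal_le_of_le_ofReal (Real.exp_pos _).le (hcomp A hA this).le) happ
  set l := κK * Real.log κK / s + 1 with hl
  have hl0 : 0 < l := by positivity
  have hlK : κK * Real.log κK ≤ s * l := by
    rw [hl, mul_add, mul_div_cancel₀ _ hs0.ne']; linarith
  set σ := ε' / 4 / ((κK:ℝ) ^ r * r) with hσ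
  have hσ0 : 0 < σ := by positivity
  set τ := ε' / 4 * σ / (κK:ℝ) ^ r with hτ
  have hτ0 : 0 < τ := by positivity
  have hε : ε0 + (κK : ℝ) ^ r * (r * σ + τ / σ) ≤ ε' := by
    have : (κK : ℝ) ^ r * (r * σ + τ / σ) = ε' / 2 := by
      rw [mul_add]
      have h1 : (κK : ℝ) ^ r * (r * σ) = ε' / 4 := by
        rw [hσ]; field_simp
      have h2 : (κK : ℝ) ^ r * (τ / σ) = ε' / 4 := by
        rw [hτ]; field_simp
      rw [h1, h2]; ring
    rw [this, hε0]; linarith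
  obtain ⟨t, σ', ht0, ht1, hσ'0, hev⟩ := hf_tau S hS N hN hτ0 hl0.le hK0R.le
  have hcard : Tendsto (fun n => (Fintype.card (S.V n) : ℝ)) atTop atTop :=
    tendsto_natCast_atTop_atTop.comp hS.1
  have hev2 : ∀ᶠ n in atTop, Real.exp (-(Fintype.card (S.V n) : ℝ)) < ε0 / 4 :=
    (Real.tendsto_exp_neg_atTop_nhds_zero.comp hcard).eventually (gt_mem_nhds (by positivity))
  have hev3 : ∀ᶠ n in atTop, Real.log 2 / s ≤ Fintype.card (S.V n) :=
    hcard.eventually_ge_atTop _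
  filter_upwards [hev, hev2, hev3] with n ⟨hNn, hemb, hk⟩ hn2 hn3
  by_cases hXb : Real.exp (-(b * Fintype.card (S.V n))) ≤
    (Measure.pi (fun _ : S.V n => hlMu)).real (P n)
  swap
  · exact (not_le.mp hXb).le
  obtain ⟨k, hk0, hkk⟩ := hHom N n hNn
  have hXG : ∀ x ∈ P n, ∀ φ ∈ S.emb N n, (fun j => q (x (φ j))) ∈ F → (fun j => x (φ j)) ∈ G := by
    intro x hx φ hφ hxF
    refine ⟨hxF, ?_⟩
    by_contra hcon
    have hxc := (hP.1 n).2 hx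
    have := hP.2 N n hNn (show x ∈ S.upperShadow N n _ from by
      refine mem_iUnion₂.mpr ⟨φ, hφ, hxc, ?_, hcon⟩
      intro j _
      exact hxc (φ j) (mem_univ _))
    exact this.2 hx
  obtain ⟨T, hT1, hT2⟩ := hj_step hlMu (S.emb N n) (S.emb_inj N n hNn) k hk0 hkk hemb q hq F G hGm
    (P n) (hP.1 n).1 hXG hε00 hb hΛ0 hGΛ
    (by rw [hΛ, div_mul_cancel₀]; positivity) hXb hn2 hl0.le ht0 ht1 hσ0 hσ'0 hδ0 hδ1
    (hk k hk0 hkk) hε'0 hε hε20 hκ2 hb30 hbox hδc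
  refine hl_final hK0 hs0 (Nat.cast_nonneg _) hδs hκs ?_ hl0 hlK hT1 le_rfl measureReal_nonneg hT2
  rw [div_le_iff₀ hs0] at hn3
  linarith

lemma hm_ent {ι : Type} [Fintype ι] (A : ι → Set ℝ) (hA : ∀ i, A i ⊆ Icc 0 1)
    (h0 : ∀ i, volume (A i) ≠ 0) :
    entE (univ.pi A) = ((∑ i, -Real.log (volume (A i)).toReal : ℝ) : EReal) := by
  have ht : ∀ i, volume (A i) ≠ ⊤ := fun i =>
    ne_top_of_le_ne_top (by simp) (measure_mono (μ := volume) (hA i))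
  have hv : volume (univ.pi A) = ∏ i, volume (A i) := volume_pi_pi A
  rw [entE, hv, ENNReal.log_pos_real (Finset.prod_ne_zero_iff.mpr fun i _ => h0 i)
    (ENNReal.prod_ne_top fun i _ => ht i), ENNReal.toReal_prod, Real.log_prod
    (fun i _ => (ENNReal.toReal_pos (h0 i) (ht i)).ne'), Finset.sum_neg_distrib]
  rfl

lemma hm_proj (S : Ssee) (P : ∀ n, Set (S.V n → ℝ)) (hP : S.Hereditary P) {N n : ℕ} (hNn : N ≤ n)
    (φ : S.V N → S.V n) (hφ : φ ∈ S.emb N n)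
    (A : S.V n → Set ℝ) (hA : ∀ i, MeasurableSet (A i) ∧ A i ⊆ Icc 0 1)
    (hv : volume (univ.pi A \ P n) = 0) (h0 : volume (univ.pi A) ≠ 0) :
    volume (univ.pi (fun j => A (φ j)) \ P N) = 0 := by
  have hinj := S.emb_inj N n hNn φ hφ
  have hcube : univ.pi (fun j => A (φ j)) ⊆ unitCube (S.V N) :=
    pi_mono fun j _ => (hA (φ j)).2
  have hcube2 : univ.pi A ⊆ unitCube (S.V n) := pi_mono fun j _ => (hA j).2
  set D := univ.pi (fun j => A (φ j)) \ P N with hD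
  have hDm : MeasurableSet D :=
    (MeasurableSet.univ_pi fun j => (hA (φ j)).1).diff (hP.1 N).1
  set R : Set (S.V n → ℝ) := {x | ∀ v, v ∉ Finset.univ.image φ → x v ∈ A v} with hR
  have hRm : MeasurableSet R := by
    have : R = ⋂ v, ⋂ (_ : v ∉ Finset.univ.image φ), (fun x : S.V n → ℝ => x v) ⁻¹' (A v) := by
      ext x; simp [hR]
    rw [this]
    exact MeasurableSet.iInter fun v => MeasurableSet.iInter fun _ => measurable_pi_apply v (hA v).1
  have hmp := hg_map hlMu φ hinj
  have hsub : (fun (x : S.V n → ℝ) (j : S.V N) => x (φ j)) ⁻¹' D ∩ R ⊆ univ.pi A \ P n := by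
    rintro x ⟨hx, hxR⟩
    have hxA : x ∈ univ.pi A := by
      intro v _
      by_cases hvv : v ∈ Finset.univ.image φ
      · obtain ⟨j, _, rfl⟩ := Finset.mem_image.mp hvv
        exact hx.1 j (mem_univ _)
      · exact hxR v hvv
    refine ⟨hxA, ?_⟩
    have := hP.2 N n hNn (show x ∈ S.upperShadow N n _ from by
      refine mem_iUnion₂.mpr ⟨φ, hφ, hcube2 hxA, hcube hx.1, hx.2⟩)
    exact this.2
  have hz : Measure.pi (fun _ : S.V n => hlMu)
      ((fun (x : S.V n → ℝ) (j : S.V N) => x (φ j)) ⁻¹' D ∩ R) = 0 := by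
    refine measure_mono_null hsub ?_
    rw [hl_apply_sub _ (sdiff_subset.trans hcube2), hv]
  rw [hg_indep hlMu _ _ (hmp.measurable hDm) hRm (Finset.univ.image φ) (Finset.univ.image φ)ᶜ
    disjoint_compl_right, hmp.measure_preimage hDm.nullMeasurableSet, mul_eq_zero] at hz
  · rcases hz with hz | hz
    · rwa [hl_apply_sub _ (sdiff_subset.trans hcube)] at hz
    · exfalso
      apply h0
      rw [← hl_apply_sub _ hcube2]
      refine measure_mono_null (t := R) ?_ hz
      exact fun x hx v _ => hx v (mem_univ _)
  · intro x y h hx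
    have : (fun j => x (φ j)) = fun j => y (φ j) := by
      funext j; exact h _ (by simp)
    simp only [mem_preimage] at hx ⊢
    rwa [← this]
  · intro x y h hx v hvv
    rw [← h v (by simpa using hvv)]
    exact hx v hvv

lemma hm_cardpos (S : Ssee) (n : ℕ) : (0 : EReal) < ((Fintype.card (S.V n) : ℝ) : EReal) := by
  have : (0:ℝ) < Fintype.card (S.V n) := by exact_mod_cast Fintype.card_pos
  exact_mod_cast this

lemma hm_mono (S : Ssee) (hHom : S.Homogeneous)
    (P : ∀ n, Set (S.V n → ℝ)) (hP : S.Hereditary P) {N n : ℕ} (hNn : N ≤ n) :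
    S.exEnt P N / ((Fintype.card (S.V N) : ℝ) : EReal) ≤
      S.exEnt P n / ((Fintype.card (S.V n) : ℝ) : EReal) := by
  rw [EReal.le_div_iff_mul_le (hm_cardpos S n) (EReal.coe_ne_top _)]
  refine le_sInf ?_
  rintro e ⟨b, ⟨A, hA, rfl⟩, hv, rfl⟩
  by_cases h0 : volume (univ.pi A) = 0
  · simp [entE, h0]
  have h0i : ∀ i, volume (A i) ≠ 0 := by
    have hv' : volume (univ.pi A) = ∏ i, volume (A i) := volume_pi_pi A
    rw [hv'] at h0
    exact fun i => Finset.prod_ne_zero_iff.mp h0 i (Finset.mem_univ _)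
  rw [hm_ent A (fun i => (hA i).2) h0i]
  set e : S.V n → ℝ := fun i => -Real.log (volume (A i)).toReal with he
  obtain ⟨k, hk0, hk⟩ := hHom N n hNn
  have hd := hk_double (S.emb N n) (S.emb_inj N n hNn) (fun _ v => e v)
  simp only [Finset.sum_const, nsmul_eq_mul, hk] at hd
  rw [← Finset.mul_sum] at hd
  have hc := hk_count (S.emb N n) (S.emb_inj N n hNn) k hk
  have hrR : (0:ℝ) < Fintype.card (S.V N) := by exact_mod_cast Fintype.card_pos
  have hnR : (0:ℝ) < Fintype.card (S.V n) := by exact_mod_cast Fintype.card_pos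
  have hkR : (0:ℝ) < k := by exact_mod_cast hk0
  have hne : (S.emb N n).Nonempty := by
    rw [← Finset.card_pos]
    by_contra hcon
    have : (S.emb N n).card = 0 := by omega
    rw [this] at hc
    simp only [Nat.cast_zero, zero_mul] at hc
    have := mul_pos hkR hnR
    linarith
  obtain ⟨φ, hφ, hle⟩ : ∃ φ ∈ S.emb N n, ∑ j, e (φ j) ≤
      (Fintype.card (S.V N) : ℝ) * (∑ v, e v) / Fintype.card (S.V n) := by
    refine Finset.exists_le_of_sum_le hne ?_
    rw [hd, Finset.sum_const, nsmul_eq_mul, ← mul_div_assoc, ← mul_assoc, hc]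
    rw [le_div_iff₀ hnR]
    exact le_of_eq (by ring)
  have hpr := hm_proj S P hP hNn φ hφ A hA hv h0
  have hex : S.exEnt P N ≤ ((∑ j, e (φ j) : ℝ) : EReal) := by
    refine sInf_le ⟨univ.pi (fun j => A (φ j)), ⟨_, fun j => hA (φ j), rfl⟩, hpr, ?_⟩
    rw [hm_ent _ (fun i => (hA _).2) (fun i => h0i _)]
  rw [← EReal.le_div_iff_mul_le (hm_cardpos S n) (EReal.coe_ne_top _),
    EReal.div_le_iff_le_mul (hm_cardpos S N) (EReal.coe_ne_top _)]
  refine hex.trans ?_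
  rw [← EReal.coe_div, ← EReal.coe_mul]
  refine EReal.coe_le_coe_iff.mpr (hle.trans (le_of_eq ?_))
  ring

lemma hm_le (S : Ssee) (P : ∀ n, Set (S.V n → ℝ)) (n : ℕ) :
    -(ENNReal.log (volume (P n))) ≤ S.exEnt P n := by
  refine le_sInf ?_
  rintro e ⟨b, hb, hv, rfl⟩
  rw [entE, EReal.neg_le_neg_iff, ENNReal.log_le_log_iff]
  calc volume b ≤ volume (P n ∪ b \ P n) := measure_mono (by
        intro x hx
        by_cases h : x ∈ P n
        · exact Or.inl h
        · exact Or.inr ⟨hx, h⟩)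
    _ ≤ volume (P n) + volume (b \ P n) := measure_union_le _ _
    _ = _ := by rw [hv, add_zero]

lemma hm_logexp (x : ℝ) : ENNReal.log (ENNReal.ofReal (Real.exp (-x))) = -(x : EReal) := by
  rw [ENNReal.log_ofReal_of_pos (Real.exp_pos _), Real.log_exp, EReal.coe_neg]

lemma hm_key (S : Ssee) (hS : S.Good) (hHom : S.Homogeneous)
    (P : ∀ n, Set (S.V n → ℝ)) (hP : S.Hereditary P) (N : ℕ) (hN : 1 < Fintype.card (S.V N))
    {b π1 : ℝ} (hb : 0 ≤ b) (hbπ : b < π1)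
    (hex : ((π1 * Fintype.card (S.V N) : ℝ) : EReal) < S.exEnt P N) :
    ∀ᶠ n in atTop, (b : EReal) ≤
      (-(ENNReal.log (volume (P n)))) / ((Fintype.card (S.V n) : ℝ) : EReal) := by
  have := hl_heart S hS hHom P hP N hN hb hbπ (by
    intro A hA h
    have e1 : univ.pi (fun j => A j ∩ Icc 0 1) = univ.pi A ∩ unitCube (S.V N) := by
      rw [unitCube, pi_inter_distrib]
    have h1 : S.exEnt P N ≤ entE (univ.pi A ∩ unitCube (S.V N)) := by
      refine sInf_le ⟨_, ⟨fun j => A j ∩ Icc 0 1,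
        fun j => ⟨(hA j).inter measurableSet_Icc, inter_subset_right⟩, e1.symm⟩, ?_, rfl⟩
      rw [hl_apply] at h
      refine measure_mono_null ?_ h
      rintro x ⟨⟨h1, h2⟩, h3⟩
      exact ⟨⟨h1, h3⟩, h2⟩
    have h2 := hex.trans_le h1
    rw [entE, ← hl_apply] at h2
    rw [← ENNReal.log_lt_log_iff, hm_logexp]
    exact EReal.lt_neg_comm.mp h2)
  filter_upwards [this] with n hn
  rw [EReal.le_div_iff_mul_le (hm_cardpos S n) (EReal.coe_ne_top _), ← EReal.coe_mul,
    EReal.le_neg, ← hm_logexp, ENNReal.log_le_log_iff, ← hl_apply_sub _ (hP.1 n).2]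
  exact (ENNReal.le_ofReal_iff_toReal_le (measure_ne_top _ _) (Real.exp_pos _).le).mpr hn

lemma hm_final
    (S : Ssee) (hS : S.Good) (hHom : S.Homogeneous)
    (P : ∀ n, Set (S.V n → ℝ)) (hP : S.Hereditary P) :
    ∃ L : EReal, 0 ≤ L ∧
      Tendsto (fun n => S.exEnt P n / ((Fintype.card (S.V n) : ℝ) : EReal)) atTop (nhds L) ∧
      Tendsto (fun n => (-(ENNReal.log (volume (P n)))) / ((Fintype.card (S.V n) : ℝ) : EReal))
        atTop (nhds L) := by
  set x : ℕ → EReal := fun n => S.exEnt P n / ((Fintype.card (S.V n) : ℝ) : EReal) with hx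
  set y : ℕ → EReal := fun n =>
    (-(ENNReal.log (volume (P n)))) / ((Fintype.card (S.V n) : ℝ) : EReal) with hy
  have hmono : Monotone x := fun N n h => hm_mono S hHom P hP h
  have hyx : ∀ n, y n ≤ x n := fun n =>
    EReal.div_le_div_right_of_nonneg (hm_cardpos S n).le (hm_le S P n)
  have hy0 : ∀ n, 0 ≤ y n := by
    intro n
    refine EReal.div_nonneg ?_ (hm_cardpos S n).le
    rw [EReal.le_neg, neg_zero, ENNReal.log_le_zero_iff, ← hl_apply_sub _ (hP.1 n).2]
    exact prob_le_one
  refine ⟨⨆ n, x n, (hy0 0).trans ((hyx 0).trans (le_iSup x 0)), tendsto_atTop_iSup hmono, ?_⟩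
  rw [tendsto_order]
  refine ⟨fun a ha => ?_, fun a ha => Eventually.of_forall fun n =>
    ((hyx n).trans (le_iSup x n)).trans_lt ha⟩
  obtain ⟨c, hac, hcL⟩ := EReal.lt_iff_exists_real_btwn.mp ha
  suffices h : ∀ᶠ n in atTop, (c : EReal) ≤ y n by
    filter_upwards [h] with n hn using hac.trans_le hn
  by_cases hc0 : c < 0
  · exact Eventually.of_forall fun n => le_trans (by exact_mod_cast hc0.le) (hy0 n)
  push Not at hc0
  obtain ⟨n0, hn0⟩ := lt_iSup_iff.mp hcL
  obtain ⟨N, hNn0, hN⟩ := ((eventually_ge_atTop n0).and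
    (hS.1.eventually_gt_atTop 1)).exists
  obtain ⟨π1, h1, h2⟩ := EReal.lt_iff_exists_real_btwn.mp (hn0.trans_le (hmono hNn0))
  refine hm_key S hS hHom P hP N hN hc0 (EReal.coe_lt_coe_iff.mp h1) ?_
  rw [hx] at h2
  simp only at h2
  rwa [EReal.lt_div_iff (hm_cardpos S N) (EReal.coe_ne_top _), ← EReal.coe_mul] at h2

/-- **Theorem (volume estimates for homogeneous ssee-s).**
If `V` is a good homogeneous ssee and `P` is a hereditary property of
`[0,1]`-decorations of `V`, then either the limit `π(P) = lim ex(V_n,P_n)/|V_n|`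
exists and is finite and `(-log vol(P_n))/|V_n| → π(P)`, or
`ex(V_n,P_n)/|V_n| → ∞` and `(-log vol(P_n))/|V_n| → ∞` (superexponential decay). -/
theorem counting_for_homogeneous_ssee
    (S : Ssee) (hS : S.Good) (hHom : S.Homogeneous)
    (P : ∀ n, Set (S.V n → ℝ)) (hP : S.Hereditary P) :
    (∃ π : ℝ,
      Tendsto (fun n => S.exEnt P n / ((Fintype.card (S.V n) : ℝ) : EReal))
        atTop (nhds (π : EReal)) ∧
      Tendsto (fun n => (-(ENNReal.log (volume (P n)))) / ((Fintype.card (S.V n) : ℝ) : EReal))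
        atTop (nhds (π : EReal))) ∨
    (Tendsto (fun n => S.exEnt P n / ((Fintype.card (S.V n) : ℝ) : EReal))
        atTop (nhds (⊤ : EReal)) ∧
      Tendsto (fun n => (-(ENNReal.log (volume (P n)))) / ((Fintype.card (S.V n) : ℝ) : EReal))
        atTop (nhds (⊤ : EReal))) := by
  obtain ⟨L, hL0, h1, h2⟩ := hm_final S hS hHom P hP
  induction L with
  | bot => simp at hL0
  | coe r => exact Or.inl ⟨r, h1, h2⟩
  | top => exact Or.inr ⟨h1, h2⟩

end
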